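/- Uniform Lyapunov localization: suppose α is Diophantine and λ > 0. For every δ > 0 there exists a constant C(δ) > 0 (depending only on α, λ, v, δ) such that for every x ∈ ℝ, every E with γ(E) > δ, and every nonzero ψ ∈ l²(ℤ) with ‖ψ‖_∞ = 1 solving ψ(m+1) + ψ(m−1) + λ v(x + mα) ψ(m) = E ψ(m) for all m ∈ ℤ, there exists n₀ ∈ ℤ such that |ψ(n)| ≤ C(δ) e^{−(γ(E) − δ)|n − n₀|} for all n ∈ ℤ. -/

import Mathlib

/-!
The potential is a sawtooth `V = λ v`, increasing on `[0, 1)` with slope at least `g = λ γ₋`.  The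
determinant of `z - H` on a window of `k` consecutive sites is a continuant (`contin`, `winDet`),
and Green's formula (`green_formula`) expresses a solution inside a window through its two exterior
boundary values and quotients of such determinants.  Two ingredients make it effective.

*Determinants off the real axis.*  For `z = E + i t` with `t > 0`, all sub-determinants are
controlled by resolvent bounds `1 / t`.  Hence changing finitely many sites, or moving the window,
costs only powers of `1 / t`, and together with the Diophantine density of the orbit this compares
the determinants at any two phases (`winDet_compare`).  Since some phase realises the growth
`exp (γ(E) k)` of the transfer matrix (`exists_phase_growth`), every window of `k ≤ n` sites has
determinant at least `exp (γ(E) k - ε n)`.  Here `t` is a small negative power of `n`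
(`exists_scale`).

*Counting resonances.*  The number of eigenvalues of a window below `E`, corrected by the number of
sites that crossed the discontinuity, is a nonincreasing function of the phase that drops by
exactly `n` over one period (`dropFun_antitone`, `dropFun_add_one`).  An eigenvalue within `g s` of
`E` forces a drop on an interval of phases of length `2 s`, so at most `n` separated phases can be
resonant (`card_resonant_le`).  Applied to shifts of a single window this bounds the number of
eigenvalues near `E` (`local_count_le`), so on a nonresonant window the determinants at `E + i t`
and at `E` differ by a factor at most `exp (ε n)` (`winDet_le_of_nonresonant`).  Consequently a
solution decays at rate `γ(E)` from the boundary into a nonresonant window (`window_decay`).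

To conclude, the solution is centred at a site where `|ψ| = 1`.  A window of length `n` having this
site in its bulk must be resonant, which accounts for almost all of the at most `n` resonant windows
starting in `[-2 n, n]`.  So some window starting just to the right of the centre (or ending just to
its left) is nonresonant, and for `n = 2 M` it has the site at distance `M` from the centre near its
middle, where `window_decay` gives the claim (`decay_of_windows`).
-/


open MeasureTheory Filter

noncomputable section

/-- `‖x‖ = dist(x, ℤ)`, the distance from `x` to the nearest integer. -/
noncomputable def distInt (x : ℝ) : ℝ := |x - round x|

/-- `α` is Diophantine: `‖nα‖ ≥ C n^{-τ}` for all positive integers `n`. -/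
def IsDiophantine (α : ℝ) : Prop :=
  ∃ C τ : ℝ, 0 < C ∧ 0 < τ ∧ ∀ n : ℕ, 0 < n → C * (n : ℝ) ^ (-τ) ≤ distInt ((n : ℝ) * α)

/-- The `n`-step transfer matrix `M_n(x,E) = ∏_{l=n-1}^{0} [[E - λ v(x + lα), -1],[1, 0]]`. -/
noncomputable def transferMat (lam : ℝ) (v : ℝ → ℝ) (α E x : ℝ) :
    ℕ → Matrix (Fin 2) (Fin 2) ℝ
  | 0 => 1
  | n + 1 => !![E - lam * v (x + (n : ℝ) * α), -1; 1, 0] * transferMat lam v α E x n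

/-- A norm on 2×2 real matrices (Frobenius/Hilbert-Schmidt norm). -/
noncomputable def matNorm (M : Matrix (Fin 2) (Fin 2) ℝ) : ℝ :=
  Real.sqrt (∑ i, ∑ j, (M i j) ^ 2)

/-- The Lyapunov exponent `γ(E) = inf_{n ≥ 1} (1/n) ∫₀¹ ln ‖M_n(x,E)‖ dx`. -/
noncomputable def lyap (lam : ℝ) (v : ℝ → ℝ) (α E : ℝ) : ℝ :=
  ⨅ n : ℕ+, (1 / (n : ℝ)) *
    ∫ x in (0:ℝ)..1, Real.log (matNorm (transferMat lam v α E x (n : ℕ)))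


/-! ### Continuants -/

/-- The continuant of the sequence `u`: `contin u (k + 1)` is the determinant of the `k × k`
tridiagonal matrix with diagonal `u 0, …, u (k - 1)` and off-diagonal entries `-1`.  The index is
shifted by one so that the recursion starts from the values `0, 1`. -/
def contin {R : Type*} [CommRing R] (u : ℕ → R) : ℕ → R
  | 0 => 0
  | 1 => 1
  | k + 2 => u k * contin u (k + 1) - contin u k

/-- The sequence `u` with its first `j` terms removed. -/
def shiftSeq {R : Type*} (u : ℕ → R) (j : ℕ) : ℕ → R := fun k => u (j + k)

section Continuants

variable {R : Type*} [CommRing R]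

lemma contin_congr {u w : ℕ → R} : ∀ (k : ℕ), (∀ i, i + 1 < k → u i = w i) →
    contin u k = contin w k
  | 0, _ => rfl
  | 1, _ => rfl
  | k + 2, h => by
    simp only [contin]
    rw [h k (by omega), contin_congr (k + 1) fun i hi => h i (by omega),
      contin_congr k fun i hi => h i (by omega)]

lemma contin_map {S : Type*} [CommRing S] (φ : R →+* S) (u : ℕ → R) : ∀ k : ℕ,
    φ (contin u k) = contin (fun i => φ (u i)) k
  | 0 => by simp [contin]
  | 1 => by simp [contin]
  | k + 2 => by
    simp only [contin, map_sub, map_mul]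
    rw [contin_map φ u (k + 1), contin_map φ u k]

/-- Splitting a window of `l + r` sites into two adjacent windows. -/
lemma contin_add (u : ℕ → R) (l : ℕ) : ∀ r : ℕ,
    contin u (l + r + 1) = contin u (l + 1) * contin (shiftSeq u l) (r + 1)
      - contin u l * contin (shiftSeq u (l + 1)) r
  | 0 => by simp [contin]
  | 1 => by simp [contin, shiftSeq]; ring
  | r + 2 => by
    have h1 := contin_add u l (r + 1)
    have h0 := contin_add u l r
    have e : contin u (l + (r + 2) + 1)
        = u (l + (r + 1)) * contin u (l + (r + 1) + 1) - contin u (l + r + 1) := by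
      show contin u ((l + r + 1) + 2) = _
      rw [contin]; congr 2
    have e2 : contin (shiftSeq u l) (r + 2 + 1) = u (l + (r + 1)) * contin (shiftSeq u l) (r + 1 + 1)
        - contin (shiftSeq u l) (r + 1) := by
      rw [contin]; rfl
    have e3 : contin (shiftSeq u (l + 1)) (r + 2) =
        u (l + (r + 1)) * contin (shiftSeq u (l + 1)) (r + 1) - contin (shiftSeq u (l + 1)) r := by
      rw [contin]
      simp only [shiftSeq]
      rw [show l + 1 + r = l + (r + 1) by ring]
    rw [e, e2, e3, h1, h0]
    ring

lemma contin_left (u : ℕ → R) (k : ℕ) :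
    contin u (k + 2) = u 0 * contin (shiftSeq u 1) (k + 1) - contin (shiftSeq u 2) k := by
  have h := contin_add u 1 k
  rw [show 1 + k + 1 = k + 2 by ring] at h
  rw [h]; simp [contin]

/-- Expansion of a continuant at the interior site `l`. -/
lemma contin_site (u : ℕ → R) (l r : ℕ) :
    contin u (l + r + 2) = u l * (contin u (l + 1) * contin (shiftSeq u (l + 1)) (r + 1))
      - contin u l * contin (shiftSeq u (l + 1)) (r + 1)
      - contin u (l + 1) * contin (shiftSeq u (l + 2)) r := by
  have h := contin_add u (l + 1) r
  rw [show l + 1 + r + 1 = l + r + 2 by ring] at h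
  rw [h]; simp only [contin]; ring

/-- Green's formula: a solution of the second-order recursion is determined inside a window by
its values at the two sites adjacent to the window. -/
lemma green_formula (u φ : ℕ → R) (hφ : ∀ k, φ (k + 2) = u k * φ (k + 1) - φ k) (j : ℕ) :
    ∀ r : ℕ, φ (j + 1) * contin u (j + r + 1)
      = φ 0 * contin (shiftSeq u (j + 1)) r + φ (j + r + 1) * contin u (j + 1)
  | 0 => by simp [contin]
  | 1 => by
    have wr : ∀ j, φ (j + 1) * contin u (j + 2) - φ (j + 2) * contin u (j + 1) = φ 0 := by
      intro j
      induction j with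
      | zero => simp [contin, hφ]; ring
      | succ j ih =>
        rw [show j + 1 + 2 = (j + 1) + 2 by rfl, hφ (j + 1), contin, ← ih]
        ring_nf
    have := wr j
    rw [show contin (shiftSeq u (j + 1)) 1 = 1 from rfl]
    linear_combination this
  | r + 2 => by
    have h1 := green_formula u φ hφ j (r + 1)
    have h0 := green_formula u φ hφ j r
    have e : contin u (j + (r + 2) + 1)
        = u (j + 1 + r) * contin u (j + (r + 1) + 1) - contin u (j + r + 1) := by
      show contin u ((j + r + 1) + 2) = _
      rw [contin, show j + 1 + r = j + r + 1 by ring]; rfl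
    have e2 : φ (j + (r + 2) + 1) = u (j + 1 + r) * φ (j + (r + 1) + 1) - φ (j + r + 1) := by
      have := hφ (j + r + 1)
      rw [show j + 1 + r = j + r + 1 by ring]
      exact this
    have e3 : contin (shiftSeq u (j + 1)) (r + 2) =
        u (j + 1 + r) * contin (shiftSeq u (j + 1)) (r + 1) - contin (shiftSeq u (j + 1)) r := by
      rw [contin]; rfl
    rw [e, e2, e3]
    linear_combination u (j + 1 + r) * h1 - h0

end Continuants

/-! ### Continuants with diagonal in the upper half-plane -/

section UpperHalfPlane

lemma le_norm_of_le_im {t : ℝ} {z : ℂ} (h : t ≤ z.im) : t ≤ ‖z‖ :=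
  h.trans ((le_abs_self _).trans (Complex.abs_im_le_norm z))

lemma inv_im_nonpos {z : ℂ} (h : 0 ≤ z.im) : (z⁻¹).im ≤ 0 := by
  rw [Complex.inv_im]
  exact div_nonpos_of_nonpos_of_nonneg (by linarith) (Complex.normSq_nonneg z)

/-- The ratios of consecutive continuants are values of a Herglotz-type function: this is the
Riccati recursion for the boundary entry of the resolvent. -/
lemma contin_ratio_right {u : ℕ → ℂ} {t : ℝ} (ht : 0 < t) (hu : ∀ k, t ≤ (u k).im) :
    ∀ k, contin u (k + 1) ≠ 0 ∧ (contin u k / contin u (k + 1)).im ≤ 0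
  | 0 => by simp [contin]
  | k + 1 => by
    obtain ⟨h1, h2⟩ := contin_ratio_right ht hu k
    have e : contin u (k + 1 + 1) = (u k - contin u k / contin u (k + 1)) * contin u (k + 1) := by
      rw [contin]; field_simp
    have him : t ≤ (u k - contin u k / contin u (k + 1)).im := by
      rw [Complex.sub_im]; linarith [hu k]
    have hne : u k - contin u k / contin u (k + 1) ≠ 0 := by
      intro h; rw [h] at him; simp at him; linarith
    refine ⟨by rw [e]; exact mul_ne_zero hne h1, ?_⟩
    rw [e, div_mul_cancel_right₀ h1]
    exact inv_im_nonpos (by linarith)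

lemma contin_ratio_left {t : ℝ} (ht : 0 < t) : ∀ (k : ℕ) (u : ℕ → ℂ), (∀ k, t ≤ (u k).im) →
    (contin (shiftSeq u 1) k / contin u (k + 1)).im ≤ 0
  | 0, u, _ => by simp [contin]
  | k + 1, u, hu => by
    have hu' : ∀ k, t ≤ (shiftSeq u 1 k).im := fun k => hu _
    have h1 := (contin_ratio_right ht hu' k).1
    have h2 := contin_ratio_left ht k (shiftSeq u 1) hu'
    have es : shiftSeq (shiftSeq u 1) 1 = shiftSeq u 2 := by
      funext i; simp only [shiftSeq]; congr 1; ring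
    rw [es] at h2
    have e : contin u (k + 1 + 1) = (u 0 - contin (shiftSeq u 2) k / contin (shiftSeq u 1) (k + 1))
        * contin (shiftSeq u 1) (k + 1) := by
      rw [contin_left]; field_simp
    rw [e, div_mul_cancel_right₀ h1]
    apply inv_im_nonpos
    rw [Complex.sub_im]; linarith [hu 0]

/-- Removing the site `l` from the window: the diagonal entry of the resolvent is at most
`1 / t`. -/
lemma contin_remove_site {u : ℕ → ℂ} {t : ℝ} (ht : 0 < t) (hu : ∀ k, t ≤ (u k).im) (l r : ℕ) :
    t * ‖contin u (l + 1) * contin (shiftSeq u (l + 1)) (r + 1)‖ ≤ ‖contin u (l + r + 2)‖ := by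
  have hu' : ∀ k, t ≤ (shiftSeq u (l + 1) k).im := fun k => hu _
  obtain ⟨a1, a2⟩ := contin_ratio_right ht hu l
  have b1 := (contin_ratio_right ht hu' r).1
  have b2 := contin_ratio_left ht r _ hu'
  have es : shiftSeq (shiftSeq u (l + 1)) 1 = shiftSeq u (l + 2) := by
    funext i; simp only [shiftSeq]; congr 1; ring
  rw [es] at b2
  have e : contin u (l + r + 2) = (u l - contin u l / contin u (l + 1)
      - contin (shiftSeq u (l + 2)) r / contin (shiftSeq u (l + 1)) (r + 1))
        * (contin u (l + 1) * contin (shiftSeq u (l + 1)) (r + 1)) := by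
    rw [contin_site]; field_simp
  rw [e]
  have him : t ≤ (u l - contin u l / contin u (l + 1)
      - contin (shiftSeq u (l + 2)) r / contin (shiftSeq u (l + 1)) (r + 1)).im := by
    rw [Complex.sub_im, Complex.sub_im]; linarith [hu l]
  exact (mul_le_mul_of_nonneg_right (le_norm_of_le_im him) (norm_nonneg _)).trans
    (norm_mul _ _).ge

lemma contin_remove_last {u : ℕ → ℂ} {t : ℝ} (ht : 0 < t) (hu : ∀ k, t ≤ (u k).im) (l : ℕ) :
    t * ‖contin u (l + 1)‖ ≤ ‖contin u (l + 2)‖ := by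
  simpa [contin] using contin_remove_site ht hu l 0

lemma contin_remove_first {u : ℕ → ℂ} {t : ℝ} (ht : 0 < t) (hu : ∀ k, t ≤ (u k).im) (r : ℕ) :
    t * ‖contin (shiftSeq u 1) (r + 1)‖ ≤ ‖contin u (r + 2)‖ := by
  simpa [contin] using contin_remove_site ht hu 0 r

lemma contin_append_last {u : ℕ → ℂ} {t X : ℝ} (ht : 0 < t) (hu : ∀ k, t ≤ (u k).im)
    (hX : ∀ k, ‖u k‖ + 1 / t ≤ X) (l : ℕ) :
    ‖contin u (l + 2)‖ ≤ X * ‖contin u (l + 1)‖ := by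
  have h : ‖contin u l‖ ≤ 1 / t * ‖contin u (l + 1)‖ := by
    rcases l with _ | l
    · simp only [contin, norm_zero]; positivity
    · have := contin_remove_last ht hu l
      rw [one_div, inv_mul_eq_div, le_div_iff₀ ht]; linarith
  calc ‖contin u (l + 2)‖ ≤ ‖u l‖ * ‖contin u (l + 1)‖ + ‖contin u l‖ := by
        rw [contin, ← norm_mul]; exact norm_sub_le _ _
    _ ≤ (‖u l‖ + 1 / t) * ‖contin u (l + 1)‖ := by rw [add_mul]; linarith
    _ ≤ _ := mul_le_mul_of_nonneg_right (hX l) (norm_nonneg _)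

/-- Moving a window by `s` sites changes the determinant by a factor at most `X ^ (2 * s)`. -/
lemma contin_shift_window {u : ℕ → ℂ} {t X : ℝ} (ht : 0 < t) (hu : ∀ k, t ≤ (u k).im)
    (hX : ∀ k, ‖u k‖ + 1 / t ≤ X) (k s : ℕ) :
    ‖contin (shiftSeq u s) (k + 1)‖ ≤ X ^ (2 * s) * ‖contin u (k + 1)‖ := by
  have htX : 1 / t ≤ X := by have := hX 0; have := norm_nonneg (u 0); linarith
  have hX0 : 0 ≤ X := le_trans (by positivity) htX
  induction s with
  | zero =>
    rw [show shiftSeq u 0 = u from funext fun i => by simp [shiftSeq]]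
    simp
  | succ s ih =>
    have hu' : ∀ k, t ≤ (shiftSeq u s k).im := fun k => hu _
    have h1 := contin_remove_first ht hu' k
    have h2 := contin_append_last ht hu' (X := X) (fun k => hX _) k
    have es : shiftSeq (shiftSeq u s) 1 = shiftSeq u (s + 1) := by
      funext i; simp only [shiftSeq]; congr 1; ring
    rw [es] at h1
    calc ‖contin (shiftSeq u (s + 1)) (k + 1)‖
        ≤ 1 / t * ‖contin (shiftSeq u s) (k + 2)‖ := by
          rw [one_div, inv_mul_eq_div, le_div_iff₀ ht]; linarith
      _ ≤ X * (X * ‖contin (shiftSeq u s) (k + 1)‖) :=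
          mul_le_mul htX h2 (norm_nonneg _) hX0
      _ ≤ X * (X * (X ^ (2 * s) * ‖contin u (k + 1)‖)) := by gcongr
      _ = _ := by ring

/-- Changing the diagonal at one site. -/
lemma contin_perturb_site {u w : ℕ → ℂ} {t : ℝ} (ht : 0 < t) (hu : ∀ k, t ≤ (u k).im)
    {n l : ℕ} (hl : l < n) (h : ∀ i, i ≠ l → w i = u i) :
    ‖contin w (n + 1)‖ ≤ (1 + ‖w l - u l‖ / t) * ‖contin u (n + 1)‖ := by
  obtain ⟨r, rfl⟩ : ∃ r, n = l + r + 1 := ⟨n - l - 1, by omega⟩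
  have e : contin w (l + r + 2) = contin u (l + r + 2)
      + (w l - u l) * (contin u (l + 1) * contin (shiftSeq u (l + 1)) (r + 1)) := by
    have e1 : contin w (l + 1) = contin u (l + 1) := contin_congr _ fun i hi => h i (by omega)
    have e2 : contin w l = contin u l := contin_congr _ fun i hi => h i (by omega)
    have e3 : shiftSeq w (l + 1) = shiftSeq u (l + 1) := funext fun i => h _ (by omega)
    have e4 : shiftSeq w (l + 2) = shiftSeq u (l + 2) := funext fun i => h _ (by omega)
    rw [contin_site, contin_site, e1, e2, e3, e4]; ring
  have hr := contin_remove_site ht hu l r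
  show ‖contin w (l + r + 2)‖ ≤ _ * ‖contin u (l + r + 2)‖
  rw [e]
  refine (norm_add_le _ _).trans ?_
  rw [norm_mul (w l - u l), add_mul, one_mul, div_mul_eq_mul_div, add_le_add_iff_left,
    le_div_iff₀ ht]
  nlinarith [mul_le_mul_of_nonneg_left hr (norm_nonneg (w l - u l))]

lemma contin_perturb {u w : ℕ → ℂ} {t : ℝ} (ht : 0 < t) (hu : ∀ k, t ≤ (u k).im)
    (hw : ∀ k, t ≤ (w k).im) (n : ℕ) :
    ‖contin w (n + 1)‖ ≤ (∏ i ∈ Finset.range n, (1 + ‖w i - u i‖ / t)) * ‖contin u (n + 1)‖ := by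
  -- the sites are changed one at a time, from left to right
  have key : ∀ j ≤ n, ‖contin (fun i => if i < j then w i else u i) (n + 1)‖
      ≤ (∏ i ∈ Finset.range j, (1 + ‖w i - u i‖ / t)) * ‖contin u (n + 1)‖ := by
    intro j
    induction j with
    | zero => simp
    | succ j ih =>
      intro hj
      have hstep := contin_perturb_site (u := fun i => if i < j then w i else u i)
        (w := fun i => if i < j + 1 then w i else u i) ht
        (fun k => by split_ifs; exacts [hw k, hu k]) (n := n) (l := j) (by omega)
        (fun i hi => by
          by_cases h1 : i < j
          · rw [if_pos h1, if_pos (by omega)]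
          · rw [if_neg h1, if_neg (by omega)])
      simp only [lt_add_iff_pos_right, zero_lt_one, if_true, lt_irrefl, if_false] at hstep
      rw [Finset.prod_range_succ]
      calc _ ≤ _ := hstep
        _ ≤ (1 + ‖w j - u j‖ / t) * ((∏ i ∈ Finset.range j, (1 + ‖w i - u i‖ / t))
              * ‖contin u (n + 1)‖) := by
            gcongr
            exact ih (by omega)
        _ = _ := by ring
  have := key n le_rfl
  rwa [contin_congr (u := fun i => if i < n then w i else u i) (w := w) (n + 1)
    (fun i hi => by simp; intro h; omega)] at this

end UpperHalfPlane

/-! ### Finite-volume matrices and their eigenvalue counting functions -/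

section Spectral

open Matrix

/-- Tridiagonal matrix with diagonal `u` and all neighbouring off-diagonal entries equal to `c`. -/
def triMat {R : Type*} [CommRing R] (c : R) (u : ℕ → R) (n : ℕ) : Matrix (Fin n) (Fin n) R :=
  Matrix.of fun i j => if i = j then u i else if (i : ℕ) + 1 = j ∨ (j : ℕ) + 1 = i then c else 0

lemma det_triMat {R : Type*} [CommRing R] : ∀ (n : ℕ) (u : ℕ → R),
    (triMat (-1) u n).det = contin u (n + 1)
  | 0, u => by simp [contin]
  | 1, u => by simp [contin, triMat]
  | n + 2, u => by
    have h1 := det_triMat (n + 1) (shiftSeq u 1)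
    have h2 := det_triMat n (shiftSeq u 2)
    rw [Matrix.det_succ_row_zero, Fin.sum_univ_succ, Fin.sum_univ_succ]
    have hz : ∀ i : Fin n, triMat (-1) u (n + 2) 0 i.succ.succ = 0 := by
      intro i
      simp [triMat, Fin.ext_iff]
    have hs : (triMat (-1) u (n + 2)).submatrix Fin.succ (Fin.succAbove 0)
        = triMat (-1) (shiftSeq u 1) (n + 1) := by
      ext i j
      simp [triMat, shiftSeq, Fin.ext_iff, add_comm 1]
    have hm : ((triMat (-1) u (n + 2)).submatrix Fin.succ (Fin.succAbove (Fin.succ 0))).det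
        = - (triMat (-1) (shiftSeq u 2) n).det := by
      rw [Matrix.det_succ_column_zero, Fin.sum_univ_succ]
      have hz' : ∀ i : Fin n, ((triMat (-1) u (n + 2)).submatrix Fin.succ
          (Fin.succAbove (Fin.succ 0))) i.succ 0 = 0 := by
        intro i
        simp [triMat, Fin.ext_iff, Fin.succAbove]
      have hs' : ((triMat (-1) u (n + 2)).submatrix Fin.succ (Fin.succAbove (Fin.succ 0))).submatrix
          (Fin.succAbove 0) Fin.succ = triMat (-1) (shiftSeq u 2) n := by
        ext i j
        simp [triMat, shiftSeq, Fin.ext_iff, Fin.succAbove, Fin.lt_def, add_comm 2]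
      rw [hs']
      simp only [hz']
      simp [triMat, Fin.ext_iff, Fin.succAbove]
    rw [hs, hm, h1, h2]
    simp only [hz]
    rw [contin_left u (n + 1)]
    simp [triMat, Fin.ext_iff]
    ring

/-- The restriction to `n` consecutive sites of the Schrödinger operator with potential `w`. -/
def boxH (w : ℕ → ℝ) (n : ℕ) : Matrix (Fin n) (Fin n) ℝ := triMat 1 w n

lemma boxH_isHermitian (w : ℕ → ℝ) (n : ℕ) : (boxH w n).IsHermitian := by
  ext i j
  simp only [boxH, triMat, conjTranspose_apply, of_apply, star_trivial]
  by_cases h : i = j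
  · subst h; simp
  · rw [if_neg h, if_neg (Ne.symm h)]
    simp [or_comm]

/-- The eigenvalues of the finite-volume operator. -/
def boxEig (w : ℕ → ℝ) (n : ℕ) : Fin n → ℝ := (boxH_isHermitian w n).eigenvalues

lemma contin_eq_prod_complex (w : ℕ → ℝ) (n : ℕ) (z : ℂ) :
    contin (fun k => z - (w k : ℂ)) (n + 1) = ∏ i, (z - (boxEig w n i : ℂ)) := by
  have h1 : (boxH w n).charpoly
      = contin (fun k => (Polynomial.X - Polynomial.C (w k) : Polynomial ℝ)) (n + 1) := by
    rw [← det_triMat, Matrix.charpoly]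
    congr 1
    ext1 i j
    rw [Matrix.charmatrix_apply]
    by_cases h : i = j
    · subst h; simp [triMat, boxH]
    · simp only [triMat, boxH, of_apply, if_neg h, Matrix.diagonal_apply_ne _ h]
      split_ifs <;> simp
  have h2 := (boxH_isHermitian w n).charpoly_eq
  rw [h1] at h2
  have h3 := congrArg (Polynomial.eval₂RingHom Complex.ofRealHom z) h2
  rw [contin_map, map_prod] at h3
  simpa [boxEig] using h3

lemma contin_eq_prod_real (w : ℕ → ℝ) (n : ℕ) (E : ℝ) :
    contin (fun k => E - w k) (n + 1) = ∏ i, (E - boxEig w n i) := by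
  have h := contin_eq_prod_complex w n E
  have h2 := contin_map Complex.ofRealHom (fun k => E - w k) (n + 1)
  simp only [map_sub, Complex.ofRealHom_eq_coe] at h2
  rw [h] at h2
  exact_mod_cast h2

/-- Expansion of the quadratic form of a Hermitian matrix in an orthonormal eigenbasis. -/
lemma exists_eigen_coords {n : ℕ} {A : Matrix (Fin n) (Fin n) ℝ} (hA : A.IsHermitian) :
    ∃ c : (Fin n → ℝ) →ₗ[ℝ] (Fin n → ℝ), ∀ f : Fin n → ℝ,
      f ⬝ᵥ f = ∑ i, c f i ^ 2 ∧ f ⬝ᵥ A *ᵥ f = ∑ i, hA.eigenvalues i * c f i ^ 2 := by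
  let b := hA.eigenvectorBasis
  let c : (Fin n → ℝ) →ₗ[ℝ] (Fin n → ℝ) :=
    { toFun := fun f i => (b i).ofLp ⬝ᵥ f
      map_add' := fun f g => by ext i; simp [dotProduct_add]
      map_smul' := fun r f => by ext i; simp [dotProduct_smul] }
  have hin : ∀ f g : Fin n → ℝ, f ⬝ᵥ g = ∑ i, c f i * c g i := by
    intro f g
    have h := b.sum_inner_mul_inner (WithLp.toLp 2 f) (WithLp.toLp 2 g)
    simp only [EuclideanSpace.inner_eq_star_dotProduct, star_trivial] at h
    rw [dotProduct_comm, ← h]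
    refine Finset.sum_congr rfl fun i _ => ?_
    show _ = ((b i).ofLp ⬝ᵥ f) * ((b i).ofLp ⬝ᵥ g)
    rw [dotProduct_comm g]
  refine ⟨c, fun f => ⟨by rw [hin]; exact Finset.sum_congr rfl fun i _ => by ring, ?_⟩⟩
  rw [hin]
  refine Finset.sum_congr rfl fun i _ => ?_
  have : c (A *ᵥ f) i = hA.eigenvalues i * c f i := by
    show (b i).ofLp ⬝ᵥ A *ᵥ f = hA.eigenvalues i * ((b i).ofLp ⬝ᵥ f)
    have hT : Aᵀ = A := by
      have := hA.eq; rwa [conjTranspose_eq_transpose_of_trivial] at this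
    rw [dotProduct_mulVec, ← mulVec_transpose, hT, hA.mulVec_eigenvectorBasis, smul_dotProduct,
      smul_eq_mul]
  rw [this]; ring

/-- The number of eigenvalues of the finite-volume operator below `E`. -/
def boxCount (w : ℕ → ℝ) (n : ℕ) (E : ℝ) : ℕ :=
  (Finset.univ.filter fun i => boxEig w n i < E).card

/-- Min-max comparison of counting functions: if, off `card Z` linear constraints, the map `L` is
isometric and lowers the quadratic form by at least `c`, then counting functions compare. -/
lemma boxCount_le {w w' : ℕ → ℝ} {n n' : ℕ} {Z : Type*} [Fintype Z]
    (Φ : (Fin n → ℝ) →ₗ[ℝ] (Z → ℝ)) (L : (Fin n → ℝ) →ₗ[ℝ] (Fin n' → ℝ)) (c E : ℝ)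
    (h1 : ∀ f, Φ f = 0 → L f ⬝ᵥ L f = f ⬝ᵥ f)
    (h2 : ∀ f, Φ f = 0 → L f ⬝ᵥ boxH w' n' *ᵥ L f ≤ f ⬝ᵥ boxH w n *ᵥ f - c * (f ⬝ᵥ f)) :
    boxCount w n E ≤ boxCount w' n' (E - c) + Fintype.card Z := by
  classical
  obtain ⟨a, ha⟩ := exists_eigen_coords (boxH_isHermitian w n)
  obtain ⟨b, hb⟩ := exists_eigen_coords (boxH_isHermitian w' n')
  change ∀ f, _ ∧ _ = ∑ i, boxEig w n i * _ at ha
  change ∀ f, _ ∧ _ = ∑ i, boxEig w' n' i * _ at hb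
  let S := {i : Fin n // ¬ boxEig w n i < E}
  let S' := {i : Fin n' // boxEig w' n' i < E - c}
  let Ψ : (Fin n → ℝ) →ₗ[ℝ] ((Z → ℝ) × ((S → ℝ) × (S' → ℝ))) :=
    Φ.prod (((LinearMap.funLeft ℝ ℝ (Subtype.val : S → Fin n)).comp a).prod
      ((LinearMap.funLeft ℝ ℝ (Subtype.val : S' → Fin n')).comp (b.comp L)))
  have hinj : Function.Injective Ψ := by
    rw [← LinearMap.ker_eq_bot, LinearMap.ker_eq_bot']
    intro f hf
    have hΦ : Φ f = 0 := congrArg Prod.fst hf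
    have hSa : ∀ i, ¬ boxEig w n i < E → a f i = 0 := fun i hi =>
      congrFun (congrArg (fun p => p.2.1) hf) (⟨i, hi⟩ : S)
    have hSb : ∀ i, boxEig w' n' i < E - c → b (L f) i = 0 := fun i hi =>
      congrFun (congrArg (fun p => p.2.2) hf) (⟨i, hi⟩ : S')
    by_contra hne
    have hpos : 0 < f ⬝ᵥ f := by
      obtain ⟨i, hi⟩ := Function.ne_iff.mp hne
      exact Finset.sum_pos' (fun i _ => mul_self_nonneg _)
        ⟨i, Finset.mem_univ _, mul_self_pos.mpr hi⟩
    have hA : f ⬝ᵥ boxH w n *ᵥ f < E * (f ⬝ᵥ f) := by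
      rw [(ha f).1] at hpos
      rw [(ha f).1, (ha f).2, Finset.mul_sum]
      obtain ⟨i, -, hi⟩ := Finset.exists_ne_zero_of_sum_ne_zero hpos.ne'
      refine Finset.sum_lt_sum (fun j _ => ?_) ⟨i, Finset.mem_univ _, ?_⟩
      · by_cases hj : boxEig w n j < E
        · exact mul_le_mul_of_nonneg_right hj.le (sq_nonneg _)
        · simp [hSa j hj]
      · have hi' : boxEig w n i < E := by
          by_contra hc; exact hi (by simp [hSa i hc])
        exact mul_lt_mul_of_pos_right hi' (lt_of_le_of_ne (sq_nonneg _) (Ne.symm hi))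
    have hB : (E - c) * (L f ⬝ᵥ L f) ≤ L f ⬝ᵥ boxH w' n' *ᵥ L f := by
      rw [(hb (L f)).1, (hb (L f)).2, Finset.mul_sum]
      refine Finset.sum_le_sum fun j _ => ?_
      by_cases hj : boxEig w' n' j < E - c
      · simp [hSb j hj]
      · exact mul_le_mul_of_nonneg_right (not_lt.mp hj) (sq_nonneg _)
    have := h1 f hΦ
    have := h2 f hΦ
    rw [h1 f hΦ] at hB
    linarith
  have hdim := LinearMap.finrank_le_finrank_of_injective hinj
  simp only [Module.finrank_prod, Module.finrank_fintype_fun_eq_card, Fintype.card_fin] at hdim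
  have c1 : Fintype.card S = n - boxCount w n E := by
    rw [Fintype.card_subtype_compl, Fintype.card_fin, Fintype.card_subtype]; rfl
  have c2 : Fintype.card S' = boxCount w' n' (E - c) := Fintype.card_subtype _
  have c3 : boxCount w n E ≤ n := by
    refine (Finset.card_filter_le _ _).trans ?_
    simp
  omega

lemma boxCount_mono (w : ℕ → ℝ) (n : ℕ) {E E' : ℝ} (h : E ≤ E') :
    boxCount w n E ≤ boxCount w n E' :=
  Finset.card_le_card fun i hi => by
    simp only [Finset.mem_filter] at hi ⊢
    exact ⟨hi.1, hi.2.trans_le h⟩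

/-- Raising the potential by at least `c` off the set `Z` of sites. -/
lemma boxCount_raise {w w' : ℕ → ℝ} {n : ℕ} (Z : Finset (Fin n)) (c E : ℝ)
    (h : ∀ i, i ∉ Z → w' (i : ℕ) + c ≤ w (i : ℕ)) :
    boxCount w n E ≤ boxCount w' n (E - c) + Z.card := by
  have := boxCount_le (w := w) (w' := w') (n := n) (n' := n) (Z := Z)
    (LinearMap.funLeft ℝ ℝ (Subtype.val : Z → Fin n)) LinearMap.id c E (fun f _ => rfl) ?_
  · simpa using this
  intro f hf
  have hf' : ∀ i ∈ Z, f i = 0 := fun i hi => congrFun hf (⟨i, hi⟩ : Z)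
  have key : ∀ i, f i * (boxH w' n *ᵥ f) i ≤ f i * (boxH w n *ᵥ f) i - c * (f i * f i) := by
    intro i
    by_cases hi : i ∈ Z
    · simp [hf' i hi]
    · have e : (boxH w n *ᵥ f) i - (boxH w' n *ᵥ f) i = (w i - w' i) * f i := by
        simp only [mulVec, dotProduct, ← Finset.sum_sub_distrib, ← sub_mul]
        rw [Finset.sum_eq_single i]
        · simp [boxH, triMat]
        · intro j _ hj; simp [boxH, triMat, Ne.symm hj]
        · simp
      have := h i hi
      have h3 : f i * (boxH w n *ᵥ f) i - f i * (boxH w' n *ᵥ f) i = (w i - w' i) * (f i * f i) := by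
        rw [← mul_sub, e]; ring
      nlinarith [mul_self_nonneg (f i)]
  simp only [dotProduct, LinearMap.id_apply, Finset.mul_sum, ← Finset.sum_sub_distrib]
  exact Finset.sum_le_sum fun i _ => key i

/-- A vector supported in a sub-window has the same norm and the same quadratic form there. -/
lemma subwindow_form (w : ℕ → ℝ) {k n' n : ℕ} (hk : k + n' ≤ n) (F : Fin n → ℝ)
    (hF : ∀ i, i ∉ Set.range (fun j : Fin n' => (⟨k + j, by omega⟩ : Fin n)) → F i = 0) :
    (F ⬝ᵥ F = (fun j : Fin n' => F ⟨k + j, by omega⟩) ⬝ᵥ fun j : Fin n' => F ⟨k + j, by omega⟩) ∧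
    F ⬝ᵥ boxH w n *ᵥ F = (fun j : Fin n' => F ⟨k + j, by omega⟩) ⬝ᵥ
      boxH (shiftSeq w k) n' *ᵥ fun j : Fin n' => F ⟨k + j, by omega⟩ := by
  have he : Function.Injective (fun j : Fin n' => (⟨k + j, by omega⟩ : Fin n)) := by
    intro a b h
    simp only [Fin.mk.injEq] at h
    exact Fin.ext (by omega)
  constructor
  · symm
    exact Fintype.sum_of_injective _ he _ _ (fun i hi => by simp [hF i hi]) (fun i => rfl)
  · symm
    refine Fintype.sum_of_injective _ he _ _ (fun i hi => by simp [hF i hi]) (fun i => ?_)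
    congr 1
    refine Fintype.sum_of_injective _ he _ _ (fun i hi => by simp [hF i hi]) (fun j => ?_)
    congr 1
    simp only [boxH, triMat, of_apply, Fin.mk.injEq, shiftSeq]
    congr 1
    · simp [Fin.ext_iff]
    · congr 1
      simp only [add_assoc, Nat.add_left_cancel_iff]

lemma boxCount_subwindow_le (w : ℕ → ℝ) {k n' n : ℕ} (hk : k + n' ≤ n) (E : ℝ) :
    boxCount (shiftSeq w k) n' E ≤ boxCount w n E := by
  have he : Function.Injective (fun j : Fin n' => (⟨k + j, by omega⟩ : Fin n)) := by
    intro a b h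
    simp only [Fin.mk.injEq] at h
    exact Fin.ext (by omega)
  let L := Function.ExtendByZero.linearMap ℝ (fun j : Fin n' => (⟨k + j, by omega⟩ : Fin n))
  have hL : ∀ f : Fin n' → ℝ, (fun j : Fin n' => L f ⟨k + j, by omega⟩) = f := by
    intro f; funext j
    exact he.extend_apply f 0 j
  have hL0 : ∀ f : Fin n' → ℝ, ∀ i,
      i ∉ Set.range (fun j : Fin n' => (⟨k + j, by omega⟩ : Fin n)) → L f i = 0 := by
    intro f i hi
    exact Function.extend_apply' _ _ _ (by simpa using hi)
  have := boxCount_le (w := shiftSeq w k) (w' := w) (n := n') (n' := n) (Z := Empty)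
    0 L 0 E (fun f _ => ?_) (fun f _ => ?_)
  · simpa using this
  · rw [(subwindow_form w hk (L f) (hL0 f)).1, hL]
  · rw [(subwindow_form w hk (L f) (hL0 f)).2, hL]; simp

lemma boxCount_le_subwindow (w : ℕ → ℝ) {k n' n : ℕ} (hk : k + n' ≤ n) (E : ℝ) :
    boxCount w n E ≤ boxCount (shiftSeq w k) n' E + (n - n') := by
  classical
  let e : Fin n' → Fin n := fun j => ⟨k + j, by omega⟩
  have he : Function.Injective e := by
    intro a b h
    simp only [e, Fin.mk.injEq] at h
    exact Fin.ext (by omega)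
  let Z := {i : Fin n // ¬ i ∈ Set.range e}
  have hZ : Fintype.card Z = n - n' := by
    rw [Fintype.card_subtype_compl, Fintype.card_fin]
    congr 1
    exact (Fintype.card_congr (Equiv.ofInjective e he).symm).trans (Fintype.card_fin n')
  have := boxCount_le (w := w) (w' := shiftSeq w k) (n := n) (n' := n') (Z := Z)
    (LinearMap.funLeft ℝ ℝ (Subtype.val : Z → Fin n)) (LinearMap.funLeft ℝ ℝ e) 0 E
    (fun f hf => ?_) (fun f hf => ?_)
  · simpa [hZ] using this
  · have hf' : ∀ i, i ∉ Set.range e → f i = 0 := fun i hi => congrFun hf (⟨i, hi⟩ : Z)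
    exact (subwindow_form w hk f hf').1.symm
  · have hf' : ∀ i, i ∉ Set.range e → f i = 0 := fun i hi => congrFun hf (⟨i, hi⟩ : Z)
    have := (subwindow_form w hk f hf').2
    simp only [zero_mul, sub_zero]
    exact this.ge

end Spectral

/-! ### Monotonicity in the phase and counting of resonances -/

section Counting

/-- A `1`-periodic sawtooth function with values in `[0, β]`, whose increments between consecutive
integers are at least `g` and at most `β` times the length. -/
structure IsSawtooth (V : ℝ → ℝ) (g β : ℝ) : Prop where
  per : ∀ x, V (x + 1) = V x
  nonneg : ∀ x, 0 ≤ V x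
  le : ∀ x, V x ≤ β
  incr : ∀ x y, ⌊x⌋ = ⌊y⌋ → x ≤ y → g * (y - x) ≤ V y - V x ∧ V y - V x ≤ β * (y - x)

/-- The potential along the orbit of `x`. -/
def orbitPot (V : ℝ → ℝ) (α x : ℝ) : ℕ → ℝ := fun k => V (x + k * α)

lemma IsSawtooth.add_int {V : ℝ → ℝ} {g β : ℝ} (hV : IsSawtooth V g β) (x : ℝ) (m : ℤ) :
    V (x + m) = V x := by
  have h : Function.Periodic V 1 := hV.per
  simpa using h.int_mul m x

lemma orbitPot_add_int {V : ℝ → ℝ} {g β : ℝ} (hV : IsSawtooth V g β) (α x : ℝ) (m : ℤ) :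
    orbitPot V α (x + m) = orbitPot V α x := by
  funext k
  simp only [orbitPot]
  rw [show x + m + k * α = (x + k * α) + m by ring, hV.add_int]

lemma shiftSeq_orbitPot (V : ℝ → ℝ) (α x : ℝ) (j : ℕ) :
    shiftSeq (orbitPot V α x) j = orbitPot V α (x + j * α) := by
  funext k
  simp only [orbitPot, shiftSeq]
  congr 1; push_cast; ring

/-- The number of eigenvalues of the window at phase `x` below `E`, corrected by the number of
sites that have passed the discontinuity; it is nonincreasing in `x`. -/
def dropFun (V : ℝ → ℝ) (α : ℝ) (n : ℕ) (E x : ℝ) : ℤ :=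
  boxCount (orbitPot V α x) n E - ∑ j : Fin n, ⌊x + (j : ℕ) * α⌋

variable {V : ℝ → ℝ} {g β : ℝ}

lemma count_step (hV : IsSawtooth V g β) (α : ℝ) (n : ℕ) (E x : ℝ) {s : ℝ} (hs : 0 ≤ s) :
    (boxCount (orbitPot V α (x + s)) n E : ℤ) ≤ boxCount (orbitPot V α x) n (E - g * s)
      + (∑ j : Fin n, ⌊x + s + (j : ℕ) * α⌋ - ∑ j : Fin n, ⌊x + (j : ℕ) * α⌋) := by
  classical
  let Z : Finset (Fin n) := Finset.univ.filter fun j => ⌊x + (j : ℕ) * α⌋ ≠ ⌊x + s + (j : ℕ) * α⌋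
  have h := boxCount_raise (w := orbitPot V α (x + s)) (w' := orbitPot V α x) Z (g * s) E ?_
  · have hZ : (Z.card : ℤ) ≤ ∑ j : Fin n, ⌊x + s + (j : ℕ) * α⌋ - ∑ j : Fin n, ⌊x + (j : ℕ) * α⌋ := by
      rw [← Finset.sum_sub_distrib, Finset.card_filter]
      push_cast
      refine Finset.sum_le_sum fun j _ => ?_
      have : ⌊x + (j : ℕ) * α⌋ ≤ ⌊x + s + (j : ℕ) * α⌋ := Int.floor_le_floor (by linarith)
      split_ifs <;> omega
    have h' : (boxCount (orbitPot V α (x + s)) n E : ℤ)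
        ≤ boxCount (orbitPot V α x) n (E - g * s) + Z.card := by exact_mod_cast h
    linarith
  · intro i hi
    have hi' : ⌊x + (i : ℕ) * α⌋ = ⌊x + s + (i : ℕ) * α⌋ := by simpa [Z] using hi
    have := (hV.incr _ _ hi' (by linarith)).1
    simp only [orbitPot]
    rw [show x + s + (i : ℕ) * α - (x + (i : ℕ) * α) = s by ring] at this
    linarith

lemma dropFun_antitone (hV : IsSawtooth V g β) (α : ℝ) (n : ℕ) (hg : 0 ≤ g) (E : ℝ) :
    Antitone (dropFun V α n E) := by
  intro x y hxy
  have h := count_step hV α n E x (s := y - x) (by linarith)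
  rw [add_sub_cancel] at h
  have h2 : boxCount (orbitPot V α x) n (E - g * (y - x)) ≤ boxCount (orbitPot V α x) n E :=
    boxCount_mono _ _ (by nlinarith)
  simp only [dropFun]
  have h2' : (boxCount (orbitPot V α x) n (E - g * (y - x)) : ℤ) ≤ boxCount (orbitPot V α x) n E := by
    exact_mod_cast h2
  linarith

lemma dropFun_add_one (hV : IsSawtooth V g β) (α : ℝ) (n : ℕ) (E x : ℝ) :
    dropFun V α n E (x + 1) = dropFun V α n E x - n := by
  have h := orbitPot_add_int hV α x 1
  rw [Int.cast_one] at h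
  simp only [dropFun, h]
  have : ∀ j : Fin n, ⌊x + 1 + (j : ℕ) * α⌋ = ⌊x + (j : ℕ) * α⌋ + 1 := by
    intro j
    rw [show x + 1 + (j : ℕ) * α = x + (j : ℕ) * α + 1 by ring, Int.floor_add_one]
  simp only [this, Finset.sum_add_distrib]
  simp
  ring

/-- Every eigenvalue of the window at phase `x` within `g * s` of `E` contributes at least one to
the decrease of `dropFun` on `[x - s, x + s]`. -/
lemma dropFun_drop (hV : IsSawtooth V g β) (α : ℝ) (n : ℕ) (E x : ℝ) {s : ℝ} (hs : 0 ≤ s) :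
    dropFun V α n E (x + s) + (boxCount (orbitPot V α x) n (E + g * s)
      - boxCount (orbitPot V α x) n (E - g * s)) ≤ dropFun V α n E (x - s) := by
  have h1 := count_step hV α n E x hs
  have h2 := count_step hV α n (E + g * s) (x - s) hs
  rw [sub_add_cancel, add_sub_cancel_right] at h2
  simp only [dropFun]
  linarith

lemma card_mul_le_of_drops {F : ℝ → ℤ} (hF : Antitone F) {s : ℝ} (m : ℤ) (a : ℝ)
    (Y : Finset ℝ) : ∀ b : ℝ, a ≤ b → (∀ y ∈ Y, a + s ≤ y ∧ y + s ≤ b ∧ F (y + s) + m ≤ F (y - s)) →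
    (∀ y ∈ Y, ∀ y' ∈ Y, y < y' → y + 2 * s ≤ y') → Y.card * m ≤ F a - F b := by
  induction Y using Finset.induction_on_max with
  | empty => intro b hab _ _; simpa using hF hab
  | insert y Y hmax ih =>
    intro b hab h1 h2
    have hy := h1 y (Finset.mem_insert_self _ _)
    have := ih (y - s) (by linarith) (fun y' hy' => ?_)
      (fun y' hy' y'' hy'' => h2 y' (Finset.mem_insert_of_mem hy') y'' (Finset.mem_insert_of_mem hy''))
    · rw [Finset.card_insert_of_notMem (fun h => lt_irrefl _ (hmax y h))]
      have hb := hF hy.2.1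
      push_cast
      linarith [hy.2.2]
    · have a1 := h1 y' (Finset.mem_insert_of_mem hy')
      have a2 := h2 y' (Finset.mem_insert_of_mem hy') y (Finset.mem_insert_self _ _) (hmax y' hy')
      exact ⟨a1.1, by linarith, a1.2.2⟩

lemma distInt_le (x : ℝ) (m : ℤ) : distInt x ≤ |x - m| := round_le x m

/-- At most `n` well separated phases are resonant, counted with multiplicity. -/
lemma card_resonant_le (hV : IsSawtooth V g β) (α : ℝ) (n : ℕ) (hg : 0 ≤ g) (E : ℝ)
    {s : ℝ} (hs : 0 < s) (hs2 : 2 * s ≤ 1) {ι : Type*}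
    (I : Finset ι) (p : ι → ℝ) (m : ℤ)
    (hsep : ∀ i ∈ I, ∀ j ∈ I, i ≠ j → 2 * s ≤ distInt (p i - p j))
    (hm : ∀ i ∈ I, m ≤ (boxCount (orbitPot V α (p i)) n (E + g * s) : ℤ)
      - boxCount (orbitPot V α (p i)) n (E - g * s)) :
    I.card * m ≤ n := by
  classical
  rcases I.eq_empty_or_nonempty with rfl | ⟨i0, hi0⟩
  · simp
  -- lift the phases to the interval of length one starting at `p i0`
  let y : ι → ℝ := fun i => p i0 + Int.fract (p i - p i0)
  have hy : ∀ i, y i = p i + ((-⌊p i - p i0⌋ : ℤ) : ℝ) := by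
    intro i; simp only [y, Int.fract]; push_cast; ring
  have hdist : ∀ i ∈ I, ∀ j ∈ I, i ≠ j → 2 * s ≤ |y i - y j| := by
    intro i hi j hj hij
    refine (hsep i hi j hj hij).trans ?_
    have := distInt_le (p i - p j) (⌊p i - p i0⌋ - ⌊p j - p i0⌋)
    rw [hy, hy]
    refine this.trans (le_of_eq (congrArg abs ?_))
    push_cast; ring
  have hinj : Set.InjOn y I := by
    intro i hi j hj hij
    by_contra hne
    have := hdist i hi j hj hne
    rw [hij] at this; simp at this; linarith
  have key := card_mul_le_of_drops (dropFun_antitone hV α n hg E) (s := s) m (p i0 - s)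
    (I.image y) (p i0 - s + 1) (by linarith) ?_ ?_
  · rw [Finset.card_image_of_injOn hinj, dropFun_add_one hV] at key
    linarith
  · intro z hz
    obtain ⟨i, hi, rfl⟩ := Finset.mem_image.mp hz
    refine ⟨?_, ?_, ?_⟩
    · have := Int.fract_nonneg (p i - p i0)
      simp only [y]; linarith
    · by_cases h : i = i0
      · subst h; simp only [y, sub_self, Int.fract_zero]; linarith
      · have h1 := hsep i hi i0 hi0 h
        have h2 := distInt_le (p i - p i0) (⌊p i - p i0⌋ + 1)
        have h3 := Int.fract_lt_one (p i - p i0)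
        have h4 : p i - p i0 - ((⌊p i - p i0⌋ + 1 : ℤ) : ℝ) = Int.fract (p i - p i0) - 1 := by
          push_cast; rw [Int.fract]; ring
        rw [h4, abs_of_neg (by linarith)] at h2
        simp only [y]; linarith
    · have h1 := dropFun_drop hV α n E (y i) hs.le
      have h2 : orbitPot V α (y i) = orbitPot V α (p i) := by
        rw [hy, orbitPot_add_int hV]
      rw [h2] at h1
      have := hm i hi
      linarith
  · intro z hz z' hz' hlt
    obtain ⟨i, hi, rfl⟩ := Finset.mem_image.mp hz
    obtain ⟨j, hj, rfl⟩ := Finset.mem_image.mp hz'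
    have := hdist j hj i hi (by rintro rfl; exact lt_irrefl _ hlt)
    rw [abs_of_pos (by linarith)] at this
    linarith

/-- Lipschitz-type bound for the local eigenvalue count, obtained from `k` shifted windows whose
phases are `2 * s`-separated. -/
lemma local_count_le (hV : IsSawtooth V g β) (α : ℝ) (n : ℕ) (hg : 0 ≤ g) (E x : ℝ)
    {s : ℝ} (hs : 0 < s) (hs2 : 2 * s ≤ 1) {k : ℕ}
    (hk : k ≤ n) (hsep : ∀ j : ℕ, 0 < j → j < k → 2 * s ≤ distInt (j * α)) :
    (k : ℤ) * ((boxCount (orbitPot V α x) n (E + g * s) : ℤ)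
      - boxCount (orbitPot V α x) n (E - g * s) - k) ≤ n := by
  have hneg : ∀ r : ℝ, distInt (-r) ≤ distInt r := by
    intro r
    have := distInt_le (-r) (-round r)
    rw [show -r - ((-round r : ℤ) : ℝ) = -(r - round r) by push_cast; ring, abs_neg] at this
    exact this
  have h := card_resonant_le hV α (n - k) hg E hs hs2 (Finset.range k) (fun j => x + (j : ℕ) * α)
    ((boxCount (orbitPot V α x) n (E + g * s) : ℤ)
      - boxCount (orbitPot V α x) n (E - g * s) - k) ?_ ?_
  · rw [Finset.card_range] at h
    have : ((n - k : ℕ) : ℤ) ≤ n := by omega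
    linarith
  · intro i hi j hj hij
    rw [Finset.mem_range] at hi hj
    rcases lt_or_gt_of_ne hij with h | h
    · refine (hsep (j - i) (by omega) (by omega)).trans (le_trans (le_of_eq ?_) (hneg _))
      congr 1
      rw [Nat.cast_sub h.le]; ring
    · refine (hsep (i - j) (by omega) (by omega)).trans (le_of_eq ?_)
      congr 1
      rw [Nat.cast_sub h.le]; ring
  · intro j hj
    rw [Finset.mem_range] at hj
    have h1 := boxCount_le_subwindow (orbitPot V α x) (k := j) (n' := n - k) (n := n) (by omega)
      (E + g * s)
    have h2 := boxCount_subwindow_le (orbitPot V α x) (k := j) (n' := n - k) (n := n) (by omega)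
      (E - g * s)
    rw [shiftSeq_orbitPot] at h1 h2
    omega

end Counting

/-! ### Comparing determinants at different phases for complex energies -/

section Comparison

/-- The determinant of `z - H` on the window of `k` sites at phase `x`. -/
def winDet (V : ℝ → ℝ) (α x : ℝ) (z : ℂ) (k : ℕ) : ℂ :=
  contin (fun i => z - (orbitPot V α x i : ℂ)) (k + 1)

lemma shiftSeq_sub_orbitPot (V : ℝ → ℝ) (α x : ℝ) (z : ℂ) (j : ℕ) :
    shiftSeq (fun i => z - (orbitPot V α x i : ℂ)) j
      = fun i => z - (orbitPot V α (x + j * α) i : ℂ) := by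
  rw [← shiftSeq_orbitPot]; rfl

/-- Quantitative density of the orbit of a Diophantine rotation, from Dirichlet's theorem. -/
lemma orbit_dense {α c : ℝ} {A : ℕ} (hc : 0 < c)
    (hD : ∀ k : ℕ, 0 < k → c / (k : ℝ) ^ A ≤ distInt (k * α)) {Q : ℕ} (hQ : 0 < Q) (x y : ℝ) :
    ∃ (s : ℕ) (m : ℤ), (s : ℝ) ≤ (Q : ℝ) ^ (A + 1) / c ∧ |y - (x + s * α + m)| ≤ 1 / Q := by
  obtain ⟨q, hq0, hqQ, hq⟩ := Real.exists_nat_abs_mul_sub_round_le α hQ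
  have hQr : (0 : ℝ) < Q := by exact_mod_cast hQ
  have hqr : (0 : ℝ) < q := by exact_mod_cast hq0
  set η : ℝ := q * α - round (q * α) with hη
  have hη1 : |η| ≤ 1 / Q := hq.trans (one_div_le_one_div_of_le hQr (by linarith))
  have hη2 : c / (Q : ℝ) ^ A ≤ |η| := by
    refine le_trans ?_ (hD q hq0)
    have : (q : ℝ) ≤ Q := by exact_mod_cast hqQ
    gcongr
  have hηpos : 0 < |η| := lt_of_lt_of_le (by positivity) hη2
  have hsize : ∀ j : ℕ, (j : ℝ) ≤ 1 / |η| → ((j * q : ℕ) : ℝ) ≤ (Q : ℝ) ^ (A + 1) / c := by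
    intro j hj
    have h1 : 1 / |η| ≤ (Q : ℝ) ^ A / c := by
      rw [div_le_div_iff₀ hηpos hc]
      rw [div_le_iff₀ (by positivity)] at hη2
      linarith
    have hqQ' : (q : ℝ) ≤ Q := by exact_mod_cast hqQ
    push_cast
    calc (j : ℝ) * q ≤ (Q : ℝ) ^ A / c * Q := by
          gcongr
          exact hj.trans h1
      _ = _ := by rw [pow_succ]; ring
  have hfl : ∀ d : ℝ, 0 ≤ d → d < 1 → ∃ j : ℕ, (j : ℝ) ≤ 1 / |η| ∧ |d - j * (|η|)| ≤ 1 / Q := by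
    intro d hd0 hd1
    refine ⟨⌊d / |η|⌋₊, ?_, ?_⟩
    · refine (Nat.floor_le (by positivity)).trans ?_
      gcongr
    · have h1 := Nat.floor_le (show 0 ≤ d / |η| by positivity)
      have h2 := Nat.lt_floor_add_one (d / |η|)
      rw [le_div_iff₀ hηpos] at h1
      rw [div_lt_iff₀ hηpos] at h2
      rw [abs_of_nonneg (by linarith)]
      linarith
  rcases le_total 0 η with hs | hs
  · obtain ⟨j, hj1, hj2⟩ := hfl _ (Int.fract_nonneg (y - x)) (Int.fract_lt_one (y - x))
    refine ⟨j * q, ⌊y - x⌋ - j * round (q * α), hsize j hj1, ?_⟩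
    rw [abs_of_nonneg hs] at hj2
    refine le_trans (le_of_eq (congrArg abs ?_)) hj2
    rw [hη, Int.fract]; push_cast; ring
  · obtain ⟨j, hj1, hj2⟩ := hfl _ (Int.fract_nonneg (x - y)) (Int.fract_lt_one (x - y))
    refine ⟨j * q, -⌊x - y⌋ - j * round (q * α), hsize j hj1, ?_⟩
    rw [abs_of_nonpos hs] at hj2
    rw [abs_sub_comm]
    refine le_trans (le_of_eq (congrArg abs ?_)) hj2
    rw [hη, Int.fract]; push_cast; ring

lemma prod_le_of_exceptions {k : ℕ} {a : ℕ → ℝ} {p q : ℝ} (Z : Finset ℕ)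
    (hZ : Z ⊆ Finset.range k) (ha : ∀ i, 0 ≤ a i)
    (hp : ∀ i ∈ Finset.range k, i ∉ Z → a i ≤ p) (hq : ∀ i ∈ Z, a i ≤ q) (hp1 : 1 ≤ p)
    (hq1 : 1 ≤ q) : ∏ i ∈ Finset.range k, a i ≤ p ^ k * q ^ Z.card := by
  calc ∏ i ∈ Finset.range k, a i ≤ ∏ i ∈ Finset.range k, (p * if i ∈ Z then q else 1) := by
        refine Finset.prod_le_prod (fun i _ => ha i) fun i hi => ?_
        split_ifs with h
        · have := hq i h; nlinarith
        · rw [mul_one]; exact hp i hi h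
    _ = p ^ k * q ^ Z.card := by
        rw [Finset.prod_mul_distrib, Finset.prod_const, Finset.card_range, Finset.prod_ite_mem,
          Finset.inter_eq_right.mpr hZ, Finset.prod_const]

lemma card_le_of_gaps {k S : ℕ} (hS : 0 < S) (Z : Finset ℕ) (hZ : Z ⊆ Finset.range k)
    (hgap : ∀ i ∈ Z, ∀ j ∈ Z, i < j → S ≤ j - i) : Z.card ≤ k / S + 1 := by
  have hinj : Set.InjOn (fun i => i / S) (Z : Set ℕ) := by
    intro i hi j hj hij
    by_contra hne
    have hlt : ∀ i j : ℕ, i / S = j / S → i < j → S ≤ j - i → False := by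
      intro i j h1 h2 h3
      have : (i + S) / S ≤ j / S := Nat.div_le_div_right (by omega)
      rw [Nat.add_div_right _ hS] at this
      omega
    rcases lt_or_gt_of_ne hne with h | h
    · exact hlt i j hij h (hgap i hi j hj h)
    · exact hlt j i hij.symm h (hgap j hj i hi h)
  rw [← Finset.card_image_of_injOn hinj, ← Finset.card_range (k / S + 1)]
  refine Finset.card_le_card fun q hq => ?_
  obtain ⟨i, hi, rfl⟩ := Finset.mem_image.mp hq
  have := Finset.mem_range.mp (hZ hi)
  rw [Finset.mem_range, Nat.lt_succ_iff]
  exact Nat.div_le_div_right (by omega)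

variable {V : ℝ → ℝ} {g β : ℝ}

/-- Two phases at distance at most `r` see potentials that differ by at most `β * r`, except at
the few sites lying within `r` of the discontinuity. -/
lemma winDet_perturb (hV : IsSawtooth V g β) (hg : 0 ≤ g) (hβ : 0 ≤ β) (α : ℝ) {z : ℂ} {t : ℝ}
    (ht : 0 < t) (hz : z.im = t) {y y' r : ℝ} (hr : |y - y'| ≤ r) {S : ℕ} (hS : 0 < S)
    (hgap : ∀ j : ℕ, 0 < j → j < S → 2 * r < distInt (j * α)) (k : ℕ) :
    ‖winDet V α y z k‖ ≤
      (1 + β * r / t) ^ k * (1 + β / t) ^ (k / S + 1) * ‖winDet V α y' z k‖ := by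
  classical
  have him : ∀ y k, t ≤ (z - (orbitPot V α y k : ℂ)).im := by
    intro y k; simp [hz]
  have hr0 : 0 ≤ r := (abs_nonneg _).trans hr
  refine (contin_perturb ht (him y') (him y) k).trans ?_
  refine mul_le_mul_of_nonneg_right ?_ (norm_nonneg _)
  let Z : Finset ℕ := (Finset.range k).filter fun i => ⌊y + i * α⌋ ≠ ⌊y' + i * α⌋
  have hZ : Z ⊆ Finset.range k := Finset.filter_subset _ _
  have hdiff : ∀ i : ℕ, ‖(z - (orbitPot V α y i : ℂ)) - (z - (orbitPot V α y' i : ℂ))‖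
      = |V (y' + i * α) - V (y + i * α)| := by
    intro i
    rw [sub_sub_sub_cancel_left, ← Complex.ofReal_sub, Complex.norm_real]
    rfl
  have hnear : ∀ i ∈ Z, ∃ m : ℤ, |y + i * α - m| ≤ r := by
    intro i hi
    have hne : ⌊y + i * α⌋ ≠ ⌊y' + i * α⌋ := (Finset.mem_filter.mp hi).2
    have hab := abs_le.mp hr
    rcases lt_or_gt_of_ne hne with h | h
    · refine ⟨⌊y' + i * α⌋, ?_⟩
      have h1 := Int.floor_lt.mp h
      have h2 := Int.floor_le (y' + i * α)
      rw [abs_le]; constructor <;> linarith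
    · refine ⟨⌊y + i * α⌋, ?_⟩
      have h1 := Int.floor_lt.mp h
      have h2 := Int.floor_le (y + i * α)
      rw [abs_le]; constructor <;> linarith
  have hcard : Z.card ≤ k / S + 1 := by
    refine card_le_of_gaps hS Z hZ fun i hi j hj hij => ?_
    by_contra hlt
    obtain ⟨a, ha⟩ := hnear i hi
    obtain ⟨b, hb⟩ := hnear j hj
    have h1 := hgap (j - i) (by omega) (by omega)
    have h2 := distInt_le (((j - i : ℕ) : ℝ) * α) (b - a)
    have h3 : ((j - i : ℕ) : ℝ) * α - ((b - a : ℤ) : ℝ)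
        = (y + j * α - b) - (y + i * α - a) := by
      rw [Nat.cast_sub hij.le]; push_cast; ring
    rw [h3] at h2
    have h4 := abs_sub (y + j * α - b) (y + i * α - a)
    linarith
  have hstep := prod_le_of_exceptions (k := k)
    (a := fun i => 1 + ‖(z - (orbitPot V α y i : ℂ)) - (z - (orbitPot V α y' i : ℂ))‖ / t)
    (p := 1 + β * r / t) (q := 1 + β / t) Z hZ (fun i => by positivity) ?_ ?_ ?_ ?_
  · refine hstep.trans ?_
    gcongr
    have : 0 ≤ β / t := by positivity
    linarith
  · intro i hi hiZ
    have hfl : ⌊y + i * α⌋ = ⌊y' + i * α⌋ := by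
      by_contra h; exact hiZ (Finset.mem_filter.mpr ⟨hi, h⟩)
    have hle : |V (y' + i * α) - V (y + i * α)| ≤ β * r := by
      rcases le_total y y' with h | h
      · have := hV.incr _ _ hfl (by linarith)
        rw [abs_of_nonneg (by nlinarith [this.1])]
        refine this.2.trans (mul_le_mul_of_nonneg_left ?_ hβ)
        have := (abs_le.mp hr).1
        linarith
      · have := hV.incr _ _ hfl.symm (by linarith)
        rw [abs_sub_comm, abs_of_nonneg (by nlinarith [this.1])]
        refine this.2.trans (mul_le_mul_of_nonneg_left ?_ hβ)
        have := (abs_le.mp hr).2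
        linarith
    simp only [hdiff]
    gcongr
  · intro i hi
    simp only [hdiff]
    gcongr
    rw [abs_le]
    constructor <;>
      linarith [hV.nonneg (y + i * α), hV.le (y + i * α), hV.nonneg (y' + i * α),
        hV.le (y' + i * α)]
  · have : 0 ≤ β * r / t := by positivity
    linarith
  · have : 0 ≤ β / t := by positivity
    linarith

/-- Any two phases give comparable determinants at energies off the real axis. -/
lemma winDet_compare (hV : IsSawtooth V g β) (hg : 0 ≤ g) (hβ : 0 ≤ β) {α c : ℝ} {A : ℕ}
    (hc : 0 < c) (hD : ∀ k : ℕ, 0 < k → c / (k : ℝ) ^ A ≤ distInt (k * α)) {z : ℂ} {t X : ℝ}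
    (ht : 0 < t) (hz : z.im = t) (hX : ∀ y k, ‖z - (orbitPot V α y k : ℂ)‖ + 1 / t ≤ X)
    (hX1 : 1 + β / t ≤ X) {Q S : ℕ} (hQ : 0 < Q) (hS : 0 < S)
    (hgap : ∀ j : ℕ, 0 < j → j < S → 2 * (1 / (Q : ℝ)) < distInt (j * α)) (x y : ℝ) (k : ℕ) :
    ‖winDet V α y z k‖ ≤ (1 + β * (1 / (Q : ℝ)) / t) ^ k * X ^ (k / S + 1)
      * X ^ (2 * ⌊(Q : ℝ) ^ (A + 1) / c⌋₊) * ‖winDet V α x z k‖ := by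
  obtain ⟨s, m, hs, hm⟩ := orbit_dense hc hD hQ x y
  have him : ∀ y k, t ≤ (z - (orbitPot V α y k : ℂ)).im := by
    intro y k; simp [hz]
  have hX1' : 1 ≤ X := by have : 0 ≤ β / t := by positivity
                          linarith
  have h1 := winDet_perturb hV hg hβ α ht hz hm hS hgap k
  have h2 : winDet V α (x + s * α + m) z k = winDet V α (x + s * α) z k := by
    simp only [winDet, orbitPot_add_int hV]
  have h3 := contin_shift_window ht (him x) (hX x) k s
  rw [shiftSeq_sub_orbitPot] at h3
  rw [h2] at h1
  refine h1.trans ?_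
  have hsQ : s ≤ ⌊(Q : ℝ) ^ (A + 1) / c⌋₊ := Nat.le_floor hs
  calc _ ≤ (1 + β * (1 / (Q : ℝ)) / t) ^ k * X ^ (k / S + 1)
        * (X ^ (2 * s) * ‖winDet V α x z k‖) := by
          gcongr
          exact h3
    _ ≤ (1 + β * (1 / (Q : ℝ)) / t) ^ k * X ^ (k / S + 1)
        * (X ^ (2 * ⌊(Q : ℝ) ^ (A + 1) / c⌋₊) * ‖winDet V α x z k‖) := by
          gcongr
    _ = _ := by ring

end Comparison

/-! ### Complex energies, resonances and the transfer matrices -/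

section Windows

variable {V : ℝ → ℝ} {g β : ℝ}

/-- The characteristic polynomial of a window only grows when its energy is moved off the
real axis. -/
lemma abs_contin_le_winDet (V : ℝ → ℝ) (α x E t : ℝ) (k : ℕ) :
    |contin (fun i => E - orbitPot V α x i) (k + 1)| ≤ ‖winDet V α x ⟨E, t⟩ k‖ := by
  rw [winDet, contin_eq_prod_real, contin_eq_prod_complex, norm_prod, Finset.abs_prod]
  refine Finset.prod_le_prod (fun _ _ => abs_nonneg _) fun i _ => ?_
  have := Complex.abs_re_le_norm ((⟨E, t⟩ : ℂ) - (boxEig (orbitPot V α x) k i : ℂ))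
  simpa using this

lemma theta_le_of_count_eq {w : ℕ → ℝ} {n : ℕ} {E θ : ℝ}
    (h : boxCount w n (E + θ) ≤ boxCount w n (E - θ)) (i : Fin n) : θ ≤ |E - boxEig w n i| := by
  by_contra! hlt
  rw [abs_lt] at hlt
  have hss : Finset.univ.filter (fun i => boxEig w n i < E - θ)
      ⊂ Finset.univ.filter (fun i => boxEig w n i < E + θ) := by
    rw [Finset.ssubset_iff_of_subset]
    · exact ⟨i, by simp; linarith, by simp; linarith⟩
    · intro j hj
      simp at hj ⊢
      linarith
  exact absurd (Finset.card_lt_card hss) (not_lt.2 h)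

lemma card_near_le (w : ℕ → ℝ) (n : ℕ) (E T : ℝ) (hT : 0 ≤ T) :
    ((Finset.univ.filter fun i : Fin n => |E - boxEig w n i| < T).card : ℤ)
      ≤ boxCount w n (E + T) - boxCount w n (E - T) := by
  have hd : Disjoint (Finset.univ.filter fun i : Fin n => |E - boxEig w n i| < T)
      (Finset.univ.filter fun i => boxEig w n i < E - T) := by
    rw [Finset.disjoint_filter]
    intro i _ h
    rw [abs_lt] at h
    linarith
  have := Finset.card_le_card (s := (Finset.univ.filter fun i : Fin n => |E - boxEig w n i| < T)
      ∪ (Finset.univ.filter fun i => boxEig w n i < E - T))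
      (t := Finset.univ.filter (fun i => boxEig w n i < E + T)) ?_
  · rw [Finset.card_union_of_disjoint hd] at this
    simp only [boxCount]
    omega
  · intro i hi
    simp [abs_lt] at hi ⊢
    rcases hi with h | h <;> linarith

/-- On a window with no eigenvalue `θ`-close to `E`, the complexified characteristic polynomial
is controlled by the real one: the few eigenvalues in the `T`-neighbourhood of `E` cost a factor
`1 + t / θ` each, the others a factor `1 + t / T`. -/
lemma winDet_le_of_nonresonant (V : ℝ → ℝ) (α x : ℝ) {E t T θ : ℝ} {n N : ℕ} (ht : 0 < t)
    (hT : 0 < T) (hθ : 0 < θ)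
    (hN : (boxCount (orbitPot V α x) n (E + T) : ℤ) - boxCount (orbitPot V α x) n (E - T) ≤ N)
    (hres : boxCount (orbitPot V α x) n (E + θ) ≤ boxCount (orbitPot V α x) n (E - θ)) :
    ‖winDet V α x ⟨E, t⟩ n‖ ≤ (1 + t / T) ^ n * (1 + t / θ) ^ N
      * |contin (fun i => E - orbitPot V α x i) (n + 1)| := by
  classical
  rw [winDet, contin_eq_prod_real, contin_eq_prod_complex, norm_prod, Finset.abs_prod]
  set e := boxEig (orbitPot V α x) n
  set Z := Finset.univ.filter fun i : Fin n => |E - e i| < T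
  have hZ : Z.card ≤ N := by
    have := card_near_le (orbitPot V α x) n E T hT.le
    simp only [Z, e]
    omega
  have h1 : ∀ i, ‖(⟨E, t⟩ : ℂ) - (e i : ℂ)‖
      ≤ ((1 + t / T) * (if i ∈ Z then 1 + t / θ else 1)) * |E - e i| := by
    intro i
    have hd : 0 < |E - e i| := lt_of_lt_of_le hθ (theta_le_of_count_eq hres i)
    have hn : ‖(⟨E, t⟩ : ℂ) - (e i : ℂ)‖ ≤ |E - e i| + t := by
      have := Complex.norm_le_abs_re_add_abs_im ((⟨E, t⟩ : ℂ) - (e i : ℂ))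
      simpa [abs_of_pos ht] using this
    refine hn.trans ?_
    have hT' : 0 < t / T := by positivity
    have hθ' : 0 < t / θ := by positivity
    split_ifs with hi
    · have h2 : t ≤ t / θ * |E - e i| := by
        rw [div_mul_eq_mul_div, le_div_iff₀ hθ]
        have := theta_le_of_count_eq hres i
        gcongr
      nlinarith [mul_pos hT' hθ', mul_pos hT' hd, mul_pos (mul_pos hT' hθ') hd]
    · have h2 : t ≤ t / T * |E - e i| := by
        rw [div_mul_eq_mul_div, le_div_iff₀ hT]
        have : T ≤ |E - e i| := by simpa [Z] using hi
        gcongr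
      linarith
  refine (Finset.prod_le_prod (fun _ _ => norm_nonneg _) fun i _ => h1 i).trans ?_
  rw [Finset.prod_mul_distrib, Finset.prod_mul_distrib, Finset.prod_const, Finset.card_univ,
    Fintype.card_fin, Finset.prod_ite_mem, Finset.univ_inter, Finset.prod_const]
  have : 1 ≤ 1 + t / θ := by have : 0 < t / θ := by positivity
                             linarith
  gcongr

/-- Entries of the transfer matrix as continuants. -/
lemma transferMat_eq (lam : ℝ) (v : ℝ → ℝ) (α E y : ℝ) (u : ℕ → ℝ)
    (hu : ∀ i : ℕ, u i = E - lam * v (y + i * α)) (k : ℕ) :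
    transferMat lam v α E y (k + 1) = !![contin u (k + 2), -contin (shiftSeq u 1) (k + 1);
      contin u (k + 1), -contin (shiftSeq u 1) k] := by
  induction k with
  | zero => simp [transferMat, contin, hu]
  | succ k ih =>
    rw [transferMat, ih, Matrix.mul_fin_two, ← hu]
    have e1 : contin u (k + 1 + 2) = u (k + 1) * contin u (k + 2) - contin u (k + 1) := rfl
    have e2 : contin (shiftSeq u 1) (k + 1 + 1)
        = u (k + 1) * contin (shiftSeq u 1) (k + 1) - contin (shiftSeq u 1) k := by
      rw [contin]; simp [shiftSeq, add_comm]
    rw [e1, e2]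
    congr 1
    ext i j
    fin_cases i <;> fin_cases j <;> simp <;> ring

lemma matNorm_le {M : Matrix (Fin 2) (Fin 2) ℝ} {b : ℝ} (hb : 0 ≤ b) (h : ∀ i j, |M i j| ≤ b) :
    matNorm M ≤ 2 * b := by
  have h2 : ∀ i j, M i j ^ 2 ≤ b ^ 2 := fun i j => sq_le_sq' (abs_le.1 (h i j)).1 (abs_le.1 (h i j)).2
  apply Real.sqrt_le_iff.2 ⟨by linarith, ?_⟩
  simp only [Fin.sum_univ_two]
  linarith [h2 0 0, h2 0 1, h2 1 0, h2 1 1]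

lemma one_le_matNorm {M : Matrix (Fin 2) (Fin 2) ℝ} (h : M.det = 1) : 1 ≤ matNorm M := by
  rw [Matrix.det_fin_two] at h
  apply Real.le_sqrt_of_sq_le
  simp only [Fin.sum_univ_two]
  nlinarith [sq_nonneg (M 0 0 - M 1 1), sq_nonneg (M 0 1 + M 1 0)]

lemma det_transferMat (lam : ℝ) (v : ℝ → ℝ) (α E x : ℝ) (n : ℕ) :
    (transferMat lam v α E x n).det = 1 := by
  induction n with
  | zero => simp [transferMat]
  | succ n ih =>
    rw [transferMat, Matrix.det_mul, ih, Matrix.det_fin_two_of]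
    ring

lemma matNorm_transferMat_le (lam : ℝ) (v : ℝ → ℝ) (α E y : ℝ) {t : ℝ} (ht : 0 < t) (ht1 : t ≤ 1)
    (k : ℕ) :
    matNorm (transferMat lam v α E y (k + 1))
      ≤ 2 * (‖winDet (fun x => lam * v x) α y ⟨E, t⟩ (k + 1)‖ / t ^ 2) := by
  set V : ℝ → ℝ := fun x => lam * v x
  set u : ℕ → ℝ := fun i => E - orbitPot V α y i
  set U : ℕ → ℂ := fun i => (⟨E, t⟩ : ℂ) - (orbitPot V α y i : ℂ)
  have hU : ∀ k, t ≤ (U k).im := by intro k; simp [U]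
  have hU' : ∀ j k, t ≤ (shiftSeq U j k).im := fun j k => hU _
  have hsh : shiftSeq u 1 = fun i => E - orbitPot V α (y + (1 : ℕ) * α) i := by
    rw [← shiftSeq_orbitPot]; rfl
  have hSh : shiftSeq U 1 = fun i => (⟨E, t⟩ : ℂ) - (orbitPot V α (y + (1 : ℕ) * α) i : ℂ) := by
    rw [← shiftSeq_orbitPot]; rfl
  set W := ‖winDet V α y ⟨E, t⟩ (k + 1)‖
  have hW : W = ‖contin U (k + 2)‖ := rfl
  have hW0 : 0 ≤ W := norm_nonneg _
  have h00 : |contin u (k + 2)| ≤ W := abs_contin_le_winDet V α y E t (k + 1)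
  have h10 : t * |contin u (k + 1)| ≤ W :=
    (mul_le_mul_of_nonneg_left (abs_contin_le_winDet V α y E t k) ht.le).trans
      (contin_remove_last ht hU k)
  have h01' : t * ‖contin (shiftSeq U 1) (k + 1)‖ ≤ W := contin_remove_first ht hU k
  have h01 : t * |contin (shiftSeq u 1) (k + 1)| ≤ W := by
    refine le_trans (mul_le_mul_of_nonneg_left ?_ ht.le) h01'
    rw [hsh, hSh]
    exact abs_contin_le_winDet V α _ E t k
  have h11 : t * (t * |contin (shiftSeq u 1) k|) ≤ W := by
    rcases k with _ | k
    · simpa [contin] using hW0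
    · refine le_trans (mul_le_mul_of_nonneg_left ?_ ht.le) h01'
      refine le_trans (mul_le_mul_of_nonneg_left ?_ ht.le) (contin_remove_last ht (hU' 1) k)
      rw [hsh, hSh]
      exact abs_contin_le_winDet V α _ E t k
  refine matNorm_le (by positivity) ?_
  rw [transferMat_eq lam v α E y u (fun i => rfl)]
  have key : ∀ a : ℝ, t * (t * a) ≤ W → a ≤ W / t ^ 2 := by
    intro a ha
    rw [le_div_iff₀ (by positivity)]
    linarith
  have hmono : ∀ a : ℝ, 0 ≤ a → t * a ≤ a := fun a ha => by nlinarith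
  intro i j
  fin_cases i <;> fin_cases j <;> simp only [Fin.mk_one, Fin.zero_eta, Matrix.of_apply,
    Matrix.cons_val', Matrix.cons_val_zero, Matrix.cons_val_one, Matrix.cons_val_fin_one, abs_neg]
  · exact key _ ((hmono _ (by positivity)).trans ((hmono _ (abs_nonneg _)).trans h00))
  · exact key _ ((hmono _ (by positivity)).trans h01)
  · exact key _ ((hmono _ (by positivity)).trans h10)
  · exact key _ h11

lemma lyap_mul_le (lam : ℝ) (v : ℝ → ℝ) (α E : ℝ) {k : ℕ} (hk : 0 < k) :
    lyap lam v α E * k ≤ ∫ x in (0:ℝ)..1, Real.log (matNorm (transferMat lam v α E x k)) := by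
  have h := ciInf_le (f := fun n : ℕ+ => (1 / (n : ℝ)) *
    ∫ x in (0:ℝ)..1, Real.log (matNorm (transferMat lam v α E x (n : ℕ)))) ?_ ⟨k, hk⟩
  · have hk' : (0 : ℝ) < k := by exact_mod_cast hk
    simp only [PNat.mk_coe] at h
    rw [← le_div_iff₀ hk']
    refine le_trans h (le_of_eq ?_)
    ring
  · refine ⟨0, ?_⟩
    rintro _ ⟨n, rfl⟩
    refine mul_nonneg (by positivity) (intervalIntegral.integral_nonneg zero_le_one fun x _ => ?_)
    exact Real.log_nonneg (one_le_matNorm (det_transferMat ..))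

/-- Some phase realises (up to a constant factor) the growth predicted by the Lyapunov
exponent. -/
lemma exists_phase_growth (lam : ℝ) (v : ℝ → ℝ) (α E : ℝ) {k : ℕ} (hk : 0 < k) :
    ∃ y, Real.exp (lyap lam v α E * k - 1) ≤ matNorm (transferMat lam v α E y k) := by
  by_contra! h
  have h1 := lyap_mul_le lam v α E hk
  have hnn : ∀ x, 0 ≤ Real.log (matNorm (transferMat lam v α E x k)) :=
    fun x => Real.log_nonneg (one_le_matNorm (det_transferMat ..))
  have h2 := intervalIntegral.norm_integral_le_of_norm_le_const (a := (0:ℝ)) (b := 1)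
    (f := fun x => Real.log (matNorm (transferMat lam v α E x k)))
    (C := lyap lam v α E * k - 1) (fun x _ => ?_)
  · have := le_trans (le_abs_self _) h2
    simp at this
    linarith
  · rw [Real.norm_eq_abs, abs_of_nonneg (hnn x)]
    have := Real.log_le_log (by linarith [one_le_matNorm (det_transferMat lam v α E x k)]) (h x).le
    rwa [Real.log_exp] at this

/-- A crude upper bound for the Lyapunov exponent, uniform on bounded sets of energies. -/
lemma lyap_le_of_bound (lam : ℝ) (v : ℝ → ℝ) (α E : ℝ) {b : ℝ} (hb : 1 ≤ b)
    (h : ∀ x, |E - lam * v x| ≤ b) : lyap lam v α E ≤ 2 * b + 1 := by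
  obtain ⟨y, hy⟩ := exists_phase_growth lam v α E one_pos
  have : matNorm (transferMat lam v α E y 1) ≤ 2 * b := by
    refine matNorm_le (by linarith) fun i j => ?_
    have := h y
    fin_cases i <;> fin_cases j <;> simp [transferMat] <;> linarith
  have h3 := Real.add_one_le_exp (lyap lam v α E * (1 : ℕ) - 1)
  push_cast at h3 hy
  linarith

end Windows

/-! ### Choice of scales -/

section Scales

variable {V : ℝ → ℝ} {g β : ℝ}

lemma exists_root (B : ℕ) (hB : 0 < B) (n : ℕ) (hn : 0 < n) :
    ∃ S : ℕ, 0 < S ∧ S ^ B ≤ n ∧ n ≤ (2 * S) ^ B ∧ ∀ m : ℕ, m ^ B ≤ n → m ≤ S := by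
  classical
  set S := Nat.findGreatest (fun S => S ^ B ≤ n) n
  have hle : ∀ m : ℕ, m ^ B ≤ n → m ≤ n := fun m h => (Nat.le_self_pow hB.ne' m).trans h
  have hmax : ∀ m : ℕ, m ^ B ≤ n → m ≤ S := fun m h => Nat.le_findGreatest (hle m h) h
  have hS : 0 < S := hmax 1 (by rw [one_pow]; exact hn)
  refine ⟨S, hS, Nat.findGreatest_spec (P := fun S => S ^ B ≤ n) (m := 1) hn
    (by rw [one_pow]; exact hn), ?_, hmax⟩
  by_contra! h
  have := hmax _ h.le
  omega

lemma eventually_log_small (K : ℝ) (hK : 1 ≤ K) (D : ℕ) {ε : ℝ} (hε : 0 < ε) :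
    ∃ S₀ : ℕ, ∀ S : ℕ, S₀ ≤ S → 1 + (3 + 2 * K) * Real.log (K * (S : ℝ) ^ D) ≤ ε * S := by
  have h1 : (fun x : ℝ => 1 + (3 + 2 * K) * (Real.log K + D * Real.log x)) =o[atTop]
      (fun x : ℝ => x) := by
    have hc : ∀ a : ℝ, (fun _ : ℝ => a) =o[atTop] (fun x : ℝ => x) := fun a =>
      Asymptotics.isLittleO_const_left.2 (Or.inr (tendsto_norm_atTop_atTop))
    exact (hc 1).add (((hc _).add (Real.isLittleO_log_id_atTop.const_mul_left _)).const_mul_left _)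
  have h2 := (h1.bound hε).and (eventually_gt_atTop 0)
  obtain ⟨S₀, hS₀⟩ := eventually_atTop.1 (tendsto_natCast_atTop_atTop.eventually h2)
  refine ⟨S₀, fun S hS => ?_⟩
  obtain ⟨h3, h4⟩ := hS₀ S hS
  rw [Real.log_mul (by positivity) (by positivity), Real.log_pow]
  rw [Real.norm_of_nonneg h4.le] at h3
  exact (le_abs_self _).trans h3

/-- A polynomial quantity `P` of the scale `S`, raised to a power at most
`(3 + 2 K) n / S`, is subexponential in `n`. -/
lemma pow_cost_le {P K ε : ℝ} {S n e : ℕ} (hP : 1 ≤ P) (hS : 0 < S)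
    (hsmall : 1 + (3 + 2 * K) * Real.log P ≤ ε * S) (he : (e : ℝ) * S ≤ (3 + 2 * K) * n) :
    Real.exp (n / S) * P ^ e ≤ Real.exp (ε * n) := by
  have hS' : (0 : ℝ) < S := by exact_mod_cast hS
  have hl : 0 ≤ Real.log P := Real.log_nonneg hP
  rw [← Real.exp_log (show 0 < P by linarith), ← Real.exp_nat_mul, ← Real.exp_add]
  apply Real.exp_le_exp.2
  have h1 : (e : ℝ) ≤ (3 + 2 * K) * n / S := by rwa [le_div_iff₀ hS']
  calc (n : ℝ) / S + e * Real.log P ≤ n / S + (3 + 2 * K) * n / S * Real.log P := by gcongr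
    _ = n / S * (1 + (3 + 2 * K) * Real.log P) := by ring
    _ ≤ n / S * (ε * S) := by gcongr
    _ = ε * n := by field_simp

lemma one_add_pow_le {a : ℝ} {k n S : ℕ} (ha : 0 ≤ a) (haS : a ≤ 1 / S) (hk : k ≤ n) :
    (1 + a) ^ k ≤ Real.exp (n / S) := by
  calc (1 + a) ^ k ≤ (1 + a) ^ n := pow_le_pow_right₀ (by linarith) hk
    _ ≤ (Real.exp (1 / S)) ^ n := by
        gcongr
        have := Real.add_one_le_exp a
        have := Real.exp_le_exp.2 haS
        linarith
    _ = Real.exp (n / S) := by rw [← Real.exp_nat_mul]; congr 1; ring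

set_option maxHeartbeats 1600000 in
/-- For every large window length `n` there is an imaginary part `t` of the energy for which
all losses are at most `exp (ε n)`: those of comparing the complexified characteristic
polynomials of windows at two different phases, and those of passing from a complex to a real
energy on a window with no eigenvalue at distance `< g c / (2 (3 n) ^ A)` from `E`. -/
lemma exists_scale (hV : IsSawtooth V g β) (hg : 0 < g) (hβ : 0 < β) {α c : ℝ} {A : ℕ}
    (hc : 0 < c) (hc1 : c ≤ 1) (hgc : g * c ≤ 2)
    (hD : ∀ k : ℕ, 0 < k → c / (k : ℝ) ^ A ≤ distInt (k * α)) {R ε : ℝ} (hR : 0 ≤ R)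
    (hε : 0 < ε) :
    ∃ n₀ : ℕ, 0 < n₀ ∧ ∀ n : ℕ, n₀ ≤ n → ∃ t : ℝ, 0 < t ∧ t ≤ 1 ∧ 1 / t ≤ Real.exp (ε * n) ∧
      (∀ E, |E| ≤ R → ∀ x y k, k ≤ n → 2 * Real.exp 1 / t ^ 2 * ‖winDet V α y ⟨E, t⟩ k‖
        ≤ Real.exp (ε * n) * ‖winDet V α x ⟨E, t⟩ k‖) ∧
      (∀ E x, boxCount (orbitPot V α x) n (E + g * (c / (2 * (3 * (n : ℝ)) ^ A)))
          ≤ boxCount (orbitPot V α x) n (E - g * (c / (2 * (3 * (n : ℝ)) ^ A))) →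
        ‖winDet V α x ⟨E, t⟩ n‖
          ≤ Real.exp (ε * n) * |contin (fun i => E - orbitPot V α x i) (n + 1)|) := by
  have hgc0 : 0 < g * c := by positivity
  set B : ℕ := (A + 2) * (A + 1) + 1 with hBdef
  have hB2 : 2 ≤ B := by nlinarith [Nat.zero_le A]
  set D : ℕ := A * B + 2 * A + 2 with hDdef
  obtain ⟨C₁, hC₁⟩ := exists_nat_gt (2 * β / (g * c) + 2 / c)
  have hC₁a : 2 * β / (g * c) ≤ C₁ := by
    have : 0 < 2 / c := by positivity
    linarith
  have hC₁b : 2 / c < C₁ := by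
    have : 0 < 2 * β / (g * c) := by positivity
    linarith
  have hC₁0 : (0 : ℝ) < C₁ := lt_trans (by positivity) hC₁b
  set K₁ : ℝ := R + β + 2 + (1 + β) * (2 / (g * c)) with hK₁
  set K₂ : ℝ := (C₁ : ℝ) ^ (A + 1) / c with hK₂
  set K₃ : ℝ := 1 + 2 * 3 ^ A * 2 ^ (A * B) / (g * c) with hK₃
  set K₄ : ℝ := 8 * Real.exp 1 / (g * c) ^ 2 with hK₄
  have k1 : 0 ≤ K₁ := by positivity
  have k2 : 0 ≤ K₂ := by positivity
  have k3 : 1 ≤ K₃ := by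
    have : 0 ≤ 2 * 3 ^ A * 2 ^ (A * B) / (g * c) := by positivity
    linarith
  have k4 : 0 ≤ K₄ := by positivity
  set K : ℝ := K₁ + K₂ + K₃ + K₄ with hK
  have hK1 : 1 ≤ K := by linarith
  obtain ⟨S₀, hS₀⟩ := eventually_log_small K hK1 D hε
  refine ⟨(S₀ + 1) ^ B, by positivity, fun n hn => ?_⟩
  obtain ⟨S, hS, hSn, hnS, hmax⟩ := exists_root B (by omega) n
    (lt_of_lt_of_le (by positivity) hn)
  have hSS₀ : S₀ ≤ S := by have := hmax _ hn; omega
  have hsmall := hS₀ S hSS₀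
  have hSr : (0 : ℝ) < S := by exact_mod_cast hS
  have hS1 : (1 : ℝ) ≤ S := by exact_mod_cast hS
  set P : ℝ := K * (S : ℝ) ^ D with hP
  have hP1 : 1 ≤ P := by
    have : (1 : ℝ) ≤ (S : ℝ) ^ D := one_le_pow₀ hS1
    exact one_le_mul_of_one_le_of_one_le hK1 this
  -- each basic quantity is at most `P`
  have hpoly : ∀ (a : ℝ) (d : ℕ), a ≤ K → 0 ≤ a → d ≤ D → a * (S : ℝ) ^ d ≤ P := by
    intro a d ha _ hd
    have : (S : ℝ) ^ d ≤ (S : ℝ) ^ D := pow_le_pow_right₀ hS1 hd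
    rw [hP]
    gcongr
  have hnr : (0 : ℝ) < n := by
    have : 0 < n := lt_of_lt_of_le (by positivity) hSn
    exact_mod_cast this
  have hSnr : (S : ℝ) ^ B ≤ n := by exact_mod_cast hSn
  have hnSr : (n : ℝ) ≤ (2 * S) ^ B := by exact_mod_cast hnS
  have hS2n : (S : ℝ) * S ≤ n := by
    refine le_trans ?_ hSnr
    rw [← sq]
    exact pow_le_pow_right₀ hS1 hB2
  have hSlen : (S : ℝ) ≤ n := (le_mul_of_one_le_left hSr.le hS1).trans hS2n
  have hKn : (n : ℝ) ≤ K * n := le_mul_of_one_le_left hnr.le hK1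
  set t : ℝ := g * c / (2 * (S : ℝ) ^ (A + 1)) with htdef
  have ht : 0 < t := by positivity
  have hSA1 : (1 : ℝ) ≤ (S : ℝ) ^ (A + 1) := one_le_pow₀ hS1
  have ht1 : t ≤ 1 := by
    rw [htdef, div_le_one (by positivity)]
    linarith
  have htinv : 1 / t = 2 / (g * c) * (S : ℝ) ^ (A + 1) := by
    rw [htdef]; field_simp
  have hXP : R + β + 2 + (1 + β) / t ≤ P := by
    refine le_trans ?_ (hpoly K₁ (A + 1) (by linarith) k1 (by omega))
    have : (1 + β) / t = (1 + β) * (2 / (g * c)) * (S : ℝ) ^ (A + 1) := by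
      rw [mul_assoc, ← htinv]; ring
    rw [this, hK₁, add_mul]
    have := le_mul_of_one_le_right (show 0 ≤ R + β + 2 by positivity) hSA1
    linarith
  have htP : 2 * Real.exp 1 / t ^ 2 ≤ P := by
    refine le_trans (le_of_eq ?_) (hpoly K₄ (2 * (A + 1)) (by linarith) k4 (by omega))
    have : 2 * Real.exp 1 / t ^ 2 = 2 * Real.exp 1 * (1 / t) ^ 2 := by ring
    rw [this, htinv, hK₄]
    ring
  refine ⟨t, ht, ht1, ?_, ?_, ?_⟩
  · have h1 : 1 / t ≤ P := by
      have : 1 / t ≤ (1 + β) / t := by gcongr; linarith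
      linarith
    have h2 := pow_cost_le (e := 1) (n := n) hP1 hS hsmall (by
      push_cast
      linarith)
    rw [pow_one] at h2
    have h3 : 1 ≤ Real.exp ((n : ℝ) / S) := Real.one_le_exp (by positivity)
    refine h1.trans (le_trans ?_ h2)
    exact le_mul_of_one_le_left (by linarith) h3
  · intro E hE x y k hk
    set Q : ℕ := C₁ * S ^ (A + 2) with hQ
    have hQr : (Q : ℝ) = C₁ * (S : ℝ) ^ (A + 2) := by rw [hQ]; push_cast; ring
    have hQ0 : (0 : ℝ) < Q := by rw [hQr]; positivity
    have hcmp := winDet_compare hV hg.le hβ.le hc hD (z := ⟨E, t⟩) ht rfl (X := P) ?_ ?_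
      (Q := Q) (S := S) (by exact_mod_cast hQ0) hS ?_ x y k
    · set F := ⌊(Q : ℝ) ^ (A + 1) / c⌋₊
      have hF : (F : ℝ) * S ≤ K₂ * n := by
        have h1 : (F : ℝ) ≤ (Q : ℝ) ^ (A + 1) / c := Nat.floor_le (by positivity)
        have h2 : (Q : ℝ) ^ (A + 1) / c * S = K₂ * (S : ℝ) ^ B := by
          rw [hQr, hK₂, hBdef, mul_pow, ← pow_mul, pow_succ (S : ℝ) ((A + 2) * (A + 1))]
          ring
        calc (F : ℝ) * S ≤ (Q : ℝ) ^ (A + 1) / c * S := by gcongr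
          _ = K₂ * (S : ℝ) ^ B := h2
          _ ≤ K₂ * n := by gcongr
      have ha : β * (1 / (Q : ℝ)) / t ≤ 1 / S := by
        have h0 : β * (1 / (Q : ℝ)) / t = (2 * β / (g * c)) / (C₁ * S) := by
          rw [hQr, htdef]
          field_simp
          ring
        rw [h0, div_le_div_iff₀ (by positivity) hSr, one_mul]
        gcongr
      have hpow := one_add_pow_le (S := S) (by positivity) ha hk
      have hcost := pow_cost_le (e := k / S + 2 + 2 * F) (n := n) hP1 hS hsmall (by
        have h1 : ((k / S : ℕ) : ℝ) * S ≤ n := by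
          exact_mod_cast (Nat.div_mul_le_self k S).trans hk
        have h2 : K₂ * n ≤ K * n := by gcongr; linarith
        push_cast
        linarith)
      calc 2 * Real.exp 1 / t ^ 2 * ‖winDet V α y ⟨E, t⟩ k‖
          ≤ P * (Real.exp (n / S) * P ^ (k / S + 1) * P ^ (2 * F) * ‖winDet V α x ⟨E, t⟩ k‖) := by
            gcongr
            refine hcmp.trans ?_
            gcongr
        _ = (Real.exp (n / S) * P ^ (k / S + 2 + 2 * F)) * ‖winDet V α x ⟨E, t⟩ k‖ := by ring
        _ ≤ _ := by gcongr
    · intro y k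
      have h1 : ‖(⟨E, t⟩ : ℂ) - (orbitPot V α y k : ℂ)‖ ≤ |E| + β + t := by
        have h := Complex.norm_le_abs_re_add_abs_im ((⟨E, t⟩ : ℂ) - (orbitPot V α y k : ℂ))
        simp [abs_of_pos ht] at h
        have h2 : |E - orbitPot V α y k| ≤ |E| + β := by
          have h3 := hV.nonneg (y + k * α)
          have h4 := hV.le (y + k * α)
          have h5 : |orbitPot V α y k| ≤ β := by
            rw [orbitPot, abs_of_nonneg h3]; exact h4
          linarith [abs_sub E (orbitPot V α y k)]
        linarith
      have : 1 / t ≤ (1 + β) / t := by gcongr; linarith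
      linarith
    · have : β / t ≤ (1 + β) / t := by gcongr; linarith
      linarith
    · intro j hj hjS
      refine lt_of_lt_of_le ?_ (hD j hj)
      have hj' : (0 : ℝ) < j := by exact_mod_cast hj
      have h1 : (j : ℝ) ^ A ≤ (S : ℝ) ^ (A + 2) := by
        calc (j : ℝ) ^ A ≤ (S : ℝ) ^ A := by
              gcongr
          _ ≤ _ := pow_le_pow_right₀ hS1 (by omega)
      rw [hQr, mul_one_div, div_lt_div_iff₀ (by positivity) (by positivity)]
      have h2 : 2 < c * C₁ := by
        rwa [div_lt_iff₀ hc, mul_comm] at hC₁b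
      calc 2 * (j : ℝ) ^ A < c * C₁ * (j : ℝ) ^ A := by gcongr
        _ ≤ c * C₁ * (S : ℝ) ^ (A + 2) := by gcongr
        _ = _ := by ring
  · intro E x hres
    set s : ℝ := c / (2 * (S : ℝ) ^ A) with hsdef
    have hs : 0 < s := by positivity
    have h2s : 2 * s = c / (S : ℝ) ^ A := by rw [hsdef]; field_simp
    have hSn' : S ≤ n := (Nat.le_self_pow (by omega) S).trans hSn
    have hloc := local_count_le hV α n hg.le E x hs (by
        rw [h2s]
        exact (div_le_self hc.le (one_le_pow₀ hS1)).trans hc1) hSn' (by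
      intro j hj hjS
      refine le_trans ?_ (hD j hj)
      rw [h2s]
      have hj' : (0 : ℝ) < j := by exact_mod_cast hj
      gcongr)
    set m : ℤ := (boxCount (orbitPot V α x) n (E + g * s) : ℤ)
      - boxCount (orbitPot V α x) n (E - g * s) with hm
    have hT : 0 < g * s := by positivity
    have hN : m ≤ (m.toNat : ℤ) := Int.self_le_toNat m
    have hm0 : 0 ≤ m := by
      have := boxCount_mono (orbitPot V α x) n (show E - g * s ≤ E + g * s by linarith)
      omega
    have hmN : (m.toNat : ℤ) = m := Int.toNat_of_nonneg hm0
    have hwin := winDet_le_of_nonresonant V α x (E := E) (n := n) ht hT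
      (by positivity) hN hres
    set θ : ℝ := g * (c / (2 * (3 * (n : ℝ)) ^ A)) with hθ
    have hθ0 : 0 < θ := by positivity
    have htT : t / (g * s) ≤ 1 / S := by
      apply le_of_eq
      rw [htdef, hsdef, pow_succ]
      field_simp
    have hpow := one_add_pow_le (S := S) (k := n) (n := n) (by positivity) htT le_rfl
    have hθP : 1 + t / θ ≤ P := by
      refine le_trans ?_ (hpoly K₃ (A * B) (by linarith) (by linarith) (by omega))
      have h1 : t / θ ≤ 2 * 3 ^ A * 2 ^ (A * B) / (g * c) * (S : ℝ) ^ (A * B) := by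
        calc t / θ ≤ 1 / θ := by gcongr
          _ = 2 * 3 ^ A / (g * c) * (n : ℝ) ^ A := by
            rw [hθ, mul_pow]; field_simp
          _ ≤ 2 * 3 ^ A / (g * c) * ((2 * (S : ℝ)) ^ B) ^ A := by gcongr
          _ = _ := by rw [← pow_mul, mul_comm B A, mul_pow]; ring
      have h2 : (1 : ℝ) ≤ (S : ℝ) ^ (A * B) := one_le_pow₀ hS1
      rw [hK₃, add_mul, one_mul]
      linarith
    have hcost := pow_cost_le (e := m.toNat) (n := n) hP1 hS hsmall (by
      have h1 : (S : ℝ) * ((m.toNat : ℝ) - S) ≤ n := by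
        rw [← hmN] at hloc
        exact_mod_cast hloc
      linarith)
    calc ‖winDet V α x ⟨E, t⟩ n‖ ≤ _ := hwin
      _ ≤ (Real.exp (n / S) * P ^ m.toNat)
          * |contin (fun i => E - orbitPot V α x i) (n + 1)| := by gcongr
      _ ≤ _ := by gcongr

end Scales

/-! ### Decay across nonresonant windows -/

section Decay

variable {V : ℝ → ℝ} {g β : ℝ}

/-- A solution is exponentially small well inside a window on which the complexified
characteristic polynomial is dominated by the real one. -/
lemma window_decay {α x E t γ η : ℝ} {n : ℕ} (ht : 0 < t) (htη : 1 / t ≤ Real.exp η)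
    (hlow : ∀ y k, k ≤ n → Real.exp (γ * k - η) ≤ ‖winDet V α y ⟨E, t⟩ k‖)
    {ψ : ℤ → ℝ} (hψ : ∀ m : ℤ, ψ (m + 1) + ψ (m - 1) + V (x + m * α) * ψ m = E * ψ m)
    (hψ1 : ∀ m, |ψ m| ≤ 1) (a : ℤ)
    (hdet : ‖winDet V α (x + a * α) ⟨E, t⟩ n‖
      ≤ Real.exp η * |contin (fun i => E - orbitPot V α (x + a * α) i) (n + 1)|)
    (j : ℕ) (hj : j < n) :
    |ψ (a + j)| ≤ Real.exp (3 * η) * (Real.exp (-(γ * j)) + Real.exp (-(γ * (n - 1 - j)))) := by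
  obtain ⟨r, rfl⟩ : ∃ r, n = j + (r + 1) := ⟨n - j - 1, by omega⟩
  set y := x + a * α with hy
  set u : ℕ → ℝ := fun i => E - orbitPot V α y i with hu
  set U : ℕ → ℂ := fun i => (⟨E, t⟩ : ℂ) - (orbitPot V α y i : ℂ) with hU
  have hUim : ∀ k, t ≤ (U k).im := by intro k; simp [U]
  have hgreen := green_formula u (fun k : ℕ => ψ (a - 1 + k)) (by
    intro k
    have h := hψ (a + k)
    have e1 : (a - 1 + ((k + 2 : ℕ) : ℤ)) = a + k + 1 := by push_cast; ring
    have e2 : (a - 1 + ((k + 1 : ℕ) : ℤ)) = a + k := by push_cast; ring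
    have e3 : (a - 1 + (k : ℤ)) = a + k - 1 := by ring
    have e4 : x + ((a + k : ℤ) : ℝ) * α = y + k * α := by rw [hy]; push_cast; ring
    rw [e4] at h
    simp only [e1, e2, e3, hu, orbitPot]
    linarith) j (r + 1)
  have e2 : (a - 1 + ((j + 1 : ℕ) : ℤ)) = a + j := by push_cast; ring
  rw [e2] at hgreen
  have hshu : shiftSeq u (j + 1) = fun i => E - orbitPot V α (y + ((j + 1 : ℕ) : ℝ) * α) i := by
    rw [← shiftSeq_orbitPot]; rfl
  set L := ‖winDet V α y ⟨E, t⟩ j‖ with hL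
  set Rr := ‖winDet V α (y + ((j + 1 : ℕ) : ℝ) * α) ⟨E, t⟩ r‖ with hRr
  set W := ‖winDet V α y ⟨E, t⟩ (j + (r + 1))‖ with hW
  have hsite : t * (L * Rr) ≤ W := by
    have h := contin_remove_site ht hUim j r
    rw [norm_mul, hU, shiftSeq_sub_orbitPot] at h
    exact h
  have hLlow := hlow y j (by omega)
  have hRlow := hlow (y + ((j + 1 : ℕ) : ℝ) * α) r (by omega)
  have hL0 : 0 < L := lt_of_lt_of_le (Real.exp_pos _) hLlow
  have hR0 : 0 < Rr := lt_of_lt_of_le (Real.exp_pos _) hRlow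
  have hcL : |contin u (j + 1)| ≤ L := abs_contin_le_winDet V α y E t j
  have hcR : |contin (shiftSeq u (j + 1)) (r + 1)| ≤ Rr := by
    rw [hshu]; exact abs_contin_le_winDet V α _ E t r
  set Dn := |contin u (j + (r + 1) + 1)| with hDn
  have hLR : L * Rr ≤ Real.exp (2 * η) * Dn := by
    calc L * Rr = 1 / t * (t * (L * Rr)) := by field_simp
      _ ≤ Real.exp η * (Real.exp η * Dn) := by
          exact mul_le_mul htη (hsite.trans hdet) (by positivity) (by positivity)
      _ = _ := by rw [two_mul, Real.exp_add]; ring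
  have hmain : |ψ (a + j)| * Dn ≤ Rr + L := by
    rw [hDn, ← abs_mul, hgreen]
    refine (abs_add_le _ _).trans ?_
    rw [abs_mul, abs_mul]
    have h1 := mul_le_mul (hψ1 (a - 1 + ((0 : ℕ) : ℤ))) hcR (abs_nonneg _) zero_le_one
    have h2 := mul_le_mul (hψ1 (a - 1 + ((j + (r + 1) + 1 : ℕ) : ℤ))) hcL (abs_nonneg _)
      zero_le_one
    linarith
  have hbound : |ψ (a + j)| ≤ Real.exp (2 * η) * (L⁻¹ + Rr⁻¹) := by
    have h1 : |ψ (a + j)| * (L * Rr) ≤ Real.exp (2 * η) * (Rr + L) := by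
      calc |ψ (a + j)| * (L * Rr) ≤ |ψ (a + j)| * (Real.exp (2 * η) * Dn) := by gcongr
        _ = Real.exp (2 * η) * (|ψ (a + j)| * Dn) := by ring
        _ ≤ _ := by gcongr
    rw [← le_div_iff₀ (by positivity)] at h1
    refine h1.trans (le_of_eq ?_)
    field_simp
  refine hbound.trans ?_
  have hinv : ∀ (b : ℝ) (q : ℝ), Real.exp (q - η) ≤ b → b⁻¹ ≤ Real.exp η * Real.exp (-q) := by
    intro b q h
    rw [← Real.exp_add, show η + -q = -(q - η) by ring, Real.exp_neg]
    exact inv_anti₀ (Real.exp_pos _) h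
  have h1 := hinv _ _ hLlow
  have h2 := hinv _ _ hRlow
  have e5 : (((j + (r + 1) : ℕ) : ℝ) - 1 - j) = r := by push_cast; ring
  rw [e5, show 3 * η = 2 * η + η by ring, Real.exp_add]
  calc Real.exp (2 * η) * (L⁻¹ + Rr⁻¹)
      ≤ Real.exp (2 * η) * (Real.exp η * Real.exp (-(γ * j)) + Real.exp η * Real.exp (-(γ * r))) := by
        gcongr
    _ = _ := by ring

lemma distInt_natAbs (d : ℤ) (α : ℝ) : distInt ((d.natAbs : ℝ) * α) ≤ distInt (d * α) := by
  rcases Int.natAbs_eq d with h | h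
  · have hd : (d : ℝ) = d.natAbs := by
      rw [← Int.cast_natCast]
      exact congrArg _ h
    rw [← hd]
  · have hd : (d : ℝ) = -(d.natAbs : ℝ) := by exact_mod_cast h
    have h2 := distInt_le ((d.natAbs : ℝ) * α) (-round (d * α))
    refine h2.trans (le_of_eq ?_)
    rw [distInt, ← abs_neg]
    congr 1
    rw [show (d.natAbs : ℝ) = -d by linarith]
    push_cast
    ring

/-- Among the windows of length `n` starting in `[-2n, n]`, at most `n` are resonant. -/
lemma card_resonant_windows (hV : IsSawtooth V g β) (hg : 0 < g) {α c : ℝ} {A : ℕ}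
    (hc : 0 < c) (hc1 : c ≤ 1)
    (hD : ∀ k : ℕ, 0 < k → c / (k : ℝ) ^ A ≤ distInt (k * α)) (x E : ℝ) {n : ℕ} (hn : 0 < n)
    (I : Finset ℤ)
    (hI : ∀ a ∈ I, -(2 * n : ℤ) ≤ a ∧ a ≤ n ∧
      ¬ (boxCount (orbitPot V α (x + a * α)) n (E + g * (c / (2 * (3 * (n : ℝ)) ^ A)))
          ≤ boxCount (orbitPot V α (x + a * α)) n (E - g * (c / (2 * (3 * (n : ℝ)) ^ A))))) :
    I.card ≤ n := by
  have hn' : (1 : ℝ) ≤ n := by exact_mod_cast hn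
  have h2s : 2 * (c / (2 * (3 * (n : ℝ)) ^ A)) = c / (3 * (n : ℝ)) ^ A := by field_simp
  have h := card_resonant_le hV α n hg.le E (s := c / (2 * (3 * (n : ℝ)) ^ A)) (by positivity) (by
      rw [h2s]
      exact (div_le_self hc.le (one_le_pow₀ (by linarith))).trans hc1)
    I (fun a => x + a * α) 1 (by
      intro i hi j hj hij
      have hne : 0 < (i - j).natAbs := Int.natAbs_pos.2 (sub_ne_zero.2 hij)
      have hle : (i - j).natAbs ≤ 3 * n := by
        have := hI i hi
        have := hI j hj
        omega
      have hle' : ((i - j).natAbs : ℝ) ≤ 3 * n := by exact_mod_cast hle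
      have hpos : (0 : ℝ) < ((i - j).natAbs : ℝ) := by exact_mod_cast hne
      have e : x + i * α - (x + j * α) = ((i - j : ℤ) : ℝ) * α := by push_cast; ring
      simp only [e]
      rw [h2s]
      refine le_trans ?_ ((hD _ hne).trans (distInt_natAbs _ _))
      gcongr) (by
      intro i hi
      have := (hI i hi).2.2
      omega)
  rw [mul_one] at h
  exact_mod_cast h

/-- The pigeonhole step: since the windows containing `0` in their bulk are all resonant, and at
most `n` windows are, some window lying just to the right (left) of `0` is nonresonant; it
contains `M` (`-M`) near its middle. -/
lemma decay_of_windows {f : ℤ → ℝ} {γ W : ℝ} {n M j₀ : ℕ} (Res : ℤ → Prop) (hW : 0 ≤ W)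
    (hcard : ∀ I : Finset ℤ, (∀ a ∈ I, -(2 * n : ℤ) ≤ a ∧ a ≤ n ∧ Res a) → I.card ≤ n)
    (hdec : ∀ a, ¬ Res a → ∀ j : ℕ, j < n →
      |f (a + j)| ≤ W * (Real.exp (-(γ * j)) + Real.exp (-(γ * (n - 1 - j)))))
    (h0 : |f 0| = 1) (hγ : 0 < γ) (hn : n = 2 * M) (hj₀ : 2 * j₀ + 1 ≤ M)
    (hsmall : W * (2 * Real.exp (-(γ * j₀))) < 1) (m : ℤ) (hm : m.natAbs = M) :
    |f m| ≤ W * (2 * Real.exp (-(γ * (M - (2 * j₀ + 1))))) := by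
  have two_exp : ∀ (p q b : ℝ), b ≤ p → b ≤ q →
      W * (Real.exp (-(γ * p)) + Real.exp (-(γ * q))) ≤ W * (2 * Real.exp (-(γ * b))) := by
    intro p q b hp hq
    rw [two_mul]
    gcongr
  have hres : ∀ a ∈ Finset.Icc (-((n : ℤ) - 1 - j₀)) (-(j₀ : ℤ)), Res a := by
    intro a ha
    rw [Finset.mem_Icc] at ha
    by_contra hr
    have h := hdec a hr (-a).toNat (by omega)
    have e : ((-a).toNat : ℤ) = -a := Int.toNat_of_nonneg (by omega)
    have er : (((-a).toNat : ℕ) : ℝ) = -a := by exact_mod_cast e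
    rw [e, add_neg_cancel, h0, er] at h
    have h1 : (j₀ : ℝ) ≤ -a := by exact_mod_cast (show (j₀ : ℤ) ≤ -a by omega)
    have h2 : (j₀ : ℝ) ≤ n - 1 - -a := by
      exact_mod_cast (show (j₀ : ℤ) ≤ n - 1 - -a by omega)
    have := two_exp _ _ _ h1 h2
    linarith
  have hex : ∀ b : ℤ, -(2 * n : ℤ) ≤ b → b + 2 * j₀ ≤ n →
      (b + 2 * j₀ < -((n : ℤ) - 1 - j₀) ∨ -(j₀ : ℤ) < b) →
      ∃ a, b ≤ a ∧ a ≤ b + 2 * j₀ ∧ ¬ Res a := by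
    intro b hb1 hb2 hb3
    by_contra! hall
    have hd : Disjoint (Finset.Icc (-((n : ℤ) - 1 - j₀)) (-(j₀ : ℤ)))
        (Finset.Icc b (b + 2 * j₀)) := by
      rw [Finset.disjoint_left]
      intro a ha hb
      rw [Finset.mem_Icc] at ha hb
      omega
    have h := hcard (Finset.Icc (-((n : ℤ) - 1 - j₀)) (-(j₀ : ℤ)) ∪ Finset.Icc b (b + 2 * j₀)) (by
      intro a ha
      rw [Finset.mem_union] at ha
      rcases ha with ha | ha
      · have hr := hres a ha
        rw [Finset.mem_Icc] at ha
        exact ⟨by omega, by omega, hr⟩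
      · rw [Finset.mem_Icc] at ha
        exact ⟨by omega, by omega, hall a ha.1 ha.2⟩)
    rw [Finset.card_union_of_disjoint hd, Int.card_Icc, Int.card_Icc] at h
    omega
  have fin : ∀ a, ¬ Res a → ((M : ℤ) - (2 * j₀ + 1) ≤ m - a) →
      ((M : ℤ) - (2 * j₀ + 1) ≤ n - 1 - (m - a)) →
      |f m| ≤ W * (2 * Real.exp (-(γ * (M - (2 * j₀ + 1))))) := by
    intro a ha h1 h2
    have e : ((m - a).toNat : ℤ) = m - a := Int.toNat_of_nonneg (by omega)
    have er : (((m - a).toNat : ℕ) : ℝ) = m - a := by exact_mod_cast e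
    have h := hdec a ha (m - a).toNat (by omega)
    rw [e, er, add_sub_cancel] at h
    refine h.trans (two_exp _ _ _ ?_ ?_)
    · exact_mod_cast h1
    · exact_mod_cast h2
  rcases Int.natAbs_eq m with h | h
  · obtain ⟨a, ha1, ha2, ha⟩ := hex 1 (by omega) (by omega) (Or.inr (by omega))
    exact fin a ha (by omega) (by omega)
  · obtain ⟨a, ha1, ha2, ha⟩ := hex (-n - 2 * j₀) (by omega) (by omega) (Or.inl (by omega))
    exact fin a ha (by omega) (by omega)

end Decay

/-! ### The sawtooth potential and the Diophantine condition -/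

lemma isSawtooth_of_mono {lam γm γp : ℝ} {v : ℝ → ℝ} (hlam : 0 < lam) (hγm : 0 < γm)
    (hγp : 0 < γp) (hper : ∀ x : ℝ, v (x + 1) = v x) (hv0 : v 0 = 0)
    (hmono : ∀ x y : ℝ, 0 ≤ x → x ≤ y → y < 1 →
      γm * (y - x) ≤ v y - v x ∧ v y - v x ≤ γp * (y - x)) :
    IsSawtooth (fun x => lam * v x) (lam * γm) (lam * γp) := by
  have hfr : ∀ x, v (Int.fract x) = v x := fun x => by
    have hp : Function.Periodic v 1 := hper
    have := hp.sub_int_mul_eq (x := x) ⌊x⌋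
    rwa [mul_one] at this
  have hbd : ∀ x, 0 ≤ v x ∧ v x ≤ γp := by
    intro x
    have h := hmono 0 (Int.fract x) le_rfl (Int.fract_nonneg x) (Int.fract_lt_one x)
    rw [hv0, hfr, sub_zero, sub_zero] at h
    have h1 := Int.fract_nonneg x
    have h2 := Int.fract_lt_one x
    constructor <;> nlinarith
  refine ⟨fun x => by simp only [hper], fun x => mul_nonneg hlam.le (hbd x).1,
    fun x => mul_le_mul_of_nonneg_left (hbd x).2 hlam.le, fun x y hxy hle => ?_⟩
  have e : Int.fract y - Int.fract x = y - x := by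
    simp only [Int.fract, hxy]; ring
  have h := hmono (Int.fract x) (Int.fract y) (Int.fract_nonneg x) (by linarith)
    (Int.fract_lt_one y)
  rw [hfr, hfr, e] at h
  constructor <;> nlinarith [h.1, h.2]

/-- A Diophantine condition with an integer exponent and an arbitrarily small constant. -/
lemma IsDiophantine.exists_nat {α : ℝ} (h : IsDiophantine α) {b : ℝ} (hb : 0 < b) :
    ∃ (c : ℝ) (A : ℕ), 0 < c ∧ c ≤ b ∧
      ∀ k : ℕ, 0 < k → c / (k : ℝ) ^ A ≤ distInt (k * α) := by
  obtain ⟨C, τ, hC, hτ, h⟩ := h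
  refine ⟨min C b, ⌈τ⌉₊, lt_min hC hb, min_le_right _ _, fun k hk => ?_⟩
  refine le_trans ?_ (h k hk)
  have hk1 : (1 : ℝ) ≤ k := by exact_mod_cast hk
  rw [div_eq_mul_inv, ← Real.rpow_natCast, ← Real.rpow_neg (by linarith)]
  have : (k : ℝ) ^ (-((⌈τ⌉₊ : ℕ) : ℝ)) ≤ (k : ℝ) ^ (-τ) :=
    Real.rpow_le_rpow_of_exponent_le hk1 (neg_le_neg (Nat.le_ceil τ))
  have h0 : 0 ≤ (k : ℝ) ^ (-τ) := by positivity
  exact mul_le_mul (min_le_left _ _) this (by positivity) hC.le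

/-- An energy with a bounded solution attaining its supremum lies in a bounded interval. -/
lemma abs_energy_le {E w a b c β : ℝ} (h : a + b + w * c = E * c) (hw0 : 0 ≤ w) (hw : w ≤ β)
    (ha : |a| ≤ 1) (hb : |b| ≤ 1) (hc : |c| = 1) : |E| ≤ β + 2 := by
  have h1 : |E| = |E * c| := by rw [abs_mul, hc, mul_one]
  rw [h1, ← h]
  refine (abs_add_le _ _).trans ?_
  have h2 := abs_add_le a b
  rw [abs_mul, hc, mul_one, abs_of_nonneg hw0]
  linarith

/-- Final choice of `ρ`, `ε`: for all large `M` the inequalities closing the argument hold with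
`j₀ = ⌊ρ M⌋ + 1`. -/
lemma final_constants {δ Γ γ ε ρ : ℝ} {M : ℕ} (hδ : 0 < δ) (hΓ : 1 ≤ Γ) (hγ : δ < γ) (hγΓ : γ ≤ Γ)
    (hρ : ρ = δ / (8 * Γ)) (hε : ε = δ * ρ / 12) (hM4 : 4 ≤ M)
    (hM1 : 6 * Γ + 2 ≤ δ * M) (hM2 : 2 < δ * ρ * M) :
    2 * (⌊ρ * M⌋₊ + 1) + 1 ≤ M ∧
    Real.exp (3 * (ε * (2 * M : ℕ))) * (2 * Real.exp (-(γ * (⌊ρ * M⌋₊ + 1 : ℕ)))) < 1 ∧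
    Real.exp (3 * (ε * (2 * M : ℕ)))
      * (2 * Real.exp (-(γ * (M - (2 * (⌊ρ * M⌋₊ + 1 : ℕ) + 1))))) ≤ Real.exp (-(γ - δ) * M) := by
  have hδΓ : δ ≤ Γ := by linarith
  have hρ0 : 0 < ρ := by rw [hρ]; positivity
  have hρ8 : ρ ≤ 1 / 8 := by
    rw [hρ, div_le_div_iff₀ (by positivity) (by norm_num)]
    linarith
  have hΓρ : Γ * ρ = δ / 8 := by rw [hρ]; field_simp
  have hM0 : (4 : ℝ) ≤ M := by exact_mod_cast hM4
  have hfl : (⌊ρ * M⌋₊ : ℝ) ≤ ρ * M := Nat.floor_le (by positivity)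
  have hfu : ρ * M < ⌊ρ * M⌋₊ + 1 := Nat.lt_floor_add_one _
  have h2e : (2 : ℝ) ≤ Real.exp 1 := by
    have := Real.add_one_le_exp 1
    linarith
  have hcomb : ∀ a b : ℝ, Real.exp a * (2 * Real.exp b) ≤ Real.exp (a + b + 1) := by
    intro a b
    rw [Real.exp_add, Real.exp_add]
    have : 0 ≤ Real.exp a * Real.exp b := by positivity
    nlinarith
  have hρM : ρ * M ≤ 1 / 8 * M := by gcongr
  have hεM : 3 * (ε * (2 * M : ℕ)) = δ * ρ * M / 2 := by rw [hε]; push_cast; ring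
  refine ⟨?_, ?_, ?_⟩
  · have : (2 * ((⌊ρ * M⌋₊ : ℝ) + 1) + 1) ≤ M := by linarith
    exact_mod_cast this
  · refine lt_of_le_of_lt (hcomb _ _) ?_
    rw [Real.exp_lt_one_iff, hεM]
    push_cast
    have : δ * (ρ * M) ≤ γ * (⌊ρ * M⌋₊ + 1) :=
      mul_le_mul hγ.le hfu.le (by positivity) (by linarith)
    linarith
  · refine (hcomb _ _).trans (Real.exp_le_exp.2 ?_)
    rw [hεM]
    push_cast
    have h1 : γ * (2 * ((⌊ρ * M⌋₊ : ℝ) + 1) + 1) ≤ Γ * (2 * (ρ * M + 1) + 1) :=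
      mul_le_mul hγΓ (by linarith) (by positivity) (by linarith)
    have h2 : Γ * (2 * (ρ * M + 1) + 1) = δ / 4 * M + 3 * Γ := by
      linear_combination (2 * (M : ℝ)) * hΓρ
    have h3 : δ * ρ * M ≤ δ * (1 / 8 * M) := by
      rw [mul_assoc]; gcongr
    linarith

/-- uniform Lyapunov localization. -/
theorem uniform_lyapunov_localization
    (α lam γm γp : ℝ) (v : ℝ → ℝ)
    (hα : Irrational α) (hlam : 0 < lam) (hγm : 0 < γm) (hγp : 0 < γp)
    (hper : ∀ x : ℝ, v (x + 1) = v x) (hv0 : v 0 = 0)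
    (hmono : ∀ x y : ℝ, 0 ≤ x → x ≤ y → y < 1 →
      γm * (y - x) ≤ v y - v x ∧ v y - v x ≤ γp * (y - x))
    (hdio : IsDiophantine α) :
    ∀ δ : ℝ, 0 < δ → ∃ C : ℝ, 0 < C ∧
      ∀ x E : ℝ, δ < lyap lam v α E →
        ∀ ψ : ℤ → ℝ,
          (∀ m : ℤ, ψ (m + 1) + ψ (m - 1) + lam * v (x + (m : ℝ) * α) * ψ m = E * ψ m) →
          Summable (fun m : ℤ => (ψ m) ^ 2) →
          (∀ m : ℤ, |ψ m| ≤ 1) → (∃ m : ℤ, |ψ m| = 1) →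
          ∃ n₀ : ℤ, ∀ n : ℤ,
            |ψ n| ≤ C * Real.exp (-(lyap lam v α E - δ) * |(n : ℝ) - (n₀ : ℝ)|) := by
  intro δ hδ
  set V : ℝ → ℝ := fun x => lam * v x with hVdef
  set g := lam * γm with hgdef
  set β := lam * γp with hβdef
  have hg : 0 < g := by positivity
  have hβ : 0 < β := by positivity
  have hV : IsSawtooth V g β := isSawtooth_of_mono hlam hγm hγp hper hv0 hmono
  obtain ⟨c, A, hc, hcb, hD⟩ := hdio.exists_nat (b := min 1 (2 / g)) (by positivity)
  have hc1 : c ≤ 1 := hcb.trans (min_le_left _ _)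
  have hgc : g * c ≤ 2 := by
    have := hcb.trans (min_le_right _ _)
    rwa [le_div_iff₀ hg, mul_comm] at this
  -- `Γ` bounds the Lyapunov exponent at every energy admitting a normalised solution
  set Γ : ℝ := 2 * (2 * β + 2) + 1 with hΓdef
  have hΓ : 1 ≤ Γ := by linarith
  set ρ : ℝ := δ / (8 * Γ) with hρ
  have hρ0 : 0 < ρ := by positivity
  set ε : ℝ := δ * ρ / 12 with hε
  have hε0 : 0 < ε := by positivity
  obtain ⟨n₁, hn₁, hscale⟩ := exists_scale hV hg hβ hc hc1 hgc hD (R := β + 2) (by positivity) hε0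
  obtain ⟨M₁, hM₁⟩ := exists_nat_gt ((6 * Γ + 2) / δ)
  obtain ⟨M₂, hM₂⟩ := exists_nat_gt (2 / (δ * ρ))
  set m₀ : ℕ := 4 + n₁ + M₁ + M₂ with hm₀
  refine ⟨Real.exp (Γ * m₀), Real.exp_pos _, ?_⟩
  intro x E hγ ψ hψ _ hψ1 ⟨p, hp⟩
  set γ := lyap lam v α E with hγdef
  have hE : |E| ≤ β + 2 := abs_energy_le (hψ p) (hV.nonneg _) (hV.le _) (hψ1 _) (hψ1 _) hp
  have hγΓ : γ ≤ Γ := by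
    refine lyap_le_of_bound lam v α E (b := 2 * β + 2) (by linarith) fun y => ?_
    have h1 := hV.nonneg y
    have h2 := hV.le y
    simp only [hVdef] at h1 h2
    rw [abs_le] at hE ⊢
    constructor <;> linarith
  refine ⟨p, fun n => ?_⟩
  set M : ℕ := (n - p).natAbs with hM
  have hMr : |(n : ℝ) - p| = M := by
    rw [hM, Nat.cast_natAbs]
    push_cast
    rfl
  rw [hMr]
  have hC1 : 1 ≤ Real.exp (Γ * m₀) := Real.one_le_exp (by positivity)
  rcases lt_or_ge M m₀ with hlt | hge
  · refine (hψ1 n).trans ?_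
    rw [← Real.exp_add]
    apply Real.one_le_exp
    have h1 : (M : ℝ) ≤ m₀ := by exact_mod_cast hlt.le
    have h2 : (γ - δ) * M ≤ Γ * m₀ :=
      mul_le_mul (by linarith) h1 (by positivity) (by linarith)
    linarith
  · have hMM₁ : (M₁ : ℝ) ≤ M := by exact_mod_cast (show M₁ ≤ M by omega)
    have hMM₂ : (M₂ : ℝ) ≤ M := by exact_mod_cast (show M₂ ≤ M by omega)
    obtain ⟨c1, c2, c3⟩ := final_constants (M := M) hδ hΓ hγ hγΓ hρ hε (by omega)
      (by
        rw [div_lt_iff₀ hδ] at hM₁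
        have : δ * M₁ ≤ δ * M := by gcongr
        linarith)
      (by
        rw [div_lt_iff₀ (by positivity)] at hM₂
        have : δ * ρ * M₂ ≤ δ * ρ * M := by gcongr
        linarith)
    obtain ⟨t, ht, ht1, htε, hcmp, hnonres⟩ := hscale (2 * M) (by omega)
    -- the eigenfunction is recentred at the site `p` where it attains its maximum
    have hf : ∀ m : ℤ, ψ (m + 1 + p) + ψ (m - 1 + p) + V (x + p * α + m * α) * ψ (m + p)
        = E * ψ (m + p) := by
      intro m
      have h := hψ (m + p)
      rw [show m + p + 1 = m + 1 + p by ring, show m + p - 1 = m - 1 + p by ring,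
        show x + ((m + p : ℤ) : ℝ) * α = x + p * α + m * α by push_cast; ring] at h
      exact h
    have hlow : ∀ y k, k ≤ 2 * M →
        Real.exp (γ * k - ε * (2 * M : ℕ)) ≤ ‖winDet V α y ⟨E, t⟩ k‖ := by
      intro y k hk
      rcases k with _ | k
      · simp only [winDet, contin, norm_one]
        apply Real.exp_le_one_iff.2
        have : 0 ≤ ε * (2 * M : ℕ) := by positivity
        push_cast at this ⊢
        linarith
      · obtain ⟨y', hy'⟩ := exists_phase_growth lam v α E (Nat.succ_pos k)
        have h1 := hy'.trans (matNorm_transferMat_le lam v α E y' ht ht1 k)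
        have h2 := hcmp E hE y y' (k + 1) hk
        rw [Real.exp_sub, div_le_iff₀ (Real.exp_pos _)] at h1 ⊢
        calc Real.exp (γ * (k + 1 : ℕ)) ≤ _ := h1
          _ = 2 * Real.exp 1 / t ^ 2 * ‖winDet V α y' ⟨E, t⟩ (k + 1)‖ := by ring
          _ ≤ _ := h2
          _ = _ := by ring
    have hdecay := decay_of_windows (f := fun m => ψ (m + p)) (γ := γ)
      (W := Real.exp (3 * (ε * (2 * M : ℕ)))) (n := 2 * M) (M := M)
      (fun a => ¬ (boxCount (orbitPot V α (x + p * α + a * α)) (2 * M)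
            (E + g * (c / (2 * (3 * ((2 * M : ℕ) : ℝ)) ^ A)))
          ≤ boxCount (orbitPot V α (x + p * α + a * α)) (2 * M)
            (E - g * (c / (2 * (3 * ((2 * M : ℕ) : ℝ)) ^ A)))))
      (Real.exp_pos _).le
      (card_resonant_windows hV hg hc hc1 hD (x + p * α) E (by omega))
      (fun a ha => window_decay (ψ := fun m => ψ (m + p)) ht htε hlow hf
        (fun m => hψ1 _) a (hnonres E _ (not_not.1 ha)))
      (by simpa using hp) (hδ.trans hγ) rfl c1 c2 (n - p) rfl
    simp only [sub_add_cancel] at hdecay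
    refine hdecay.trans (c3.trans ?_)
    exact le_mul_of_one_le_left (Real.exp_pos _).le hC1

end
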